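/- arXiv:math/0007040 — 4 statements merged into one kernel-verified Lean document; each statement's English description precedes it below -/
import Mathlib

section
/- Let V be a finite-dimensional complex vector space and N a nilpotent endomorphism of V. Then there exists at most one increasing filtration W(N) of V such that N maps W(N)_ℓ into W(N)_{ℓ-2} for all ℓ, and the induced map N^ℓ : Gr^{W(N)}_ℓ → Gr^{W(N)}_{-ℓ} is an isomorphism for all ℓ ≥ 0. -/
/-- `Wf` is an (exhaustive, separated) increasing filtration which is the monodromy weight
filtration of the nilpotent endomorphism `N`: `N` shifts the filtration by `-2` and, for each
`ℓ ≥ 0`, the map induced by `N ^ ℓ` from `Gr_ℓ` to `Gr_{-ℓ}` is an isomorphism (expressed here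
via surjectivity and injectivity modulo the lower steps of the filtration). -/
def IsWeightFiltration {K V : Type*} [Field K] [AddCommGroup V] [Module K V]
    (N : Module.End K V) (Wf : ℤ → Submodule K V) : Prop :=
  Monotone Wf ∧
  (∃ a : ℤ, ∀ k ≤ a, Wf k = ⊥) ∧
  (∃ b : ℤ, ∀ k, b ≤ k → Wf k = ⊤) ∧
  (∀ ℓ : ℤ, ∀ v ∈ Wf ℓ, N v ∈ Wf (ℓ - 2)) ∧
  (∀ ℓ : ℤ, 0 ≤ ℓ →
    ((∀ w ∈ Wf (-ℓ), ∃ v ∈ Wf ℓ, (N ^ ℓ.toNat) v - w ∈ Wf (-ℓ - 1)) ∧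
     (∀ v ∈ Wf ℓ, (N ^ ℓ.toNat) v ∈ Wf (-ℓ - 1) → v ∈ Wf (ℓ - 1))))

/-!
Iterating `N W_k ⊆ W_{k-2}` gives `N ^ ℓ W_k ⊆ W_{k-2ℓ}`. For `ℓ ≥ 0`, injectivity and surjectivity
of `N ^ ℓ : Gr_ℓ → Gr_{-ℓ}` then amount to `W_{ℓ-1} = W_ℓ ∩ (N ^ ℓ)⁻¹ W_{-ℓ-1}` and
`W_{-ℓ} = N ^ ℓ W_ℓ + W_{-ℓ-1}`. Thus the pair `(W_ℓ, W_{-ℓ-1})` determines the pair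
`(W_{ℓ-1}, W_{-ℓ})`. Since `(W_ℓ, W_{-ℓ-1}) = (V, 0)` for large `ℓ`, every step of the filtration is
determined by descending induction on `ℓ`.
-/

open Filter

namespace IsWeightFiltration

variable {K V : Type*} [Field K] [AddCommGroup V] [Module K V]
  {N : Module.End K V} {W W' : ℤ → Submodule K V}

protected theorem monotone (h : IsWeightFiltration N W) : Monotone W :=
  h.1

theorem eventually_eq_bot (h : IsWeightFiltration N W) : ∀ᶠ k in atBot, W k = ⊥ :=
  eventually_atBot.2 h.2.1

theorem eventually_eq_top (h : IsWeightFiltration N W) : ∀ᶠ k in atTop, W k = ⊤ :=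
  eventually_atTop.2 h.2.2.1

theorem map_le (h : IsWeightFiltration N W) (k : ℤ) : (W k).map N ≤ W (k - 2) :=
  Submodule.map_le_iff_le_comap.2 (h.2.2.2.1 k)

theorem map_pow_le (h : IsWeightFiltration N W) (n : ℕ) (k : ℤ) :
    (W k).map (N ^ n) ≤ W (k - 2 * n) := by
  induction n with
  | zero => simp [Module.End.one_eq_id]
  | succ n ih =>
    calc (W k).map (N ^ (n + 1))
      _ = ((W k).map (N ^ n)).map N := by
        rw [pow_succ', Module.End.mul_eq_comp, Submodule.map_comp]
      _ ≤ (W (k - 2 * n)).map N := Submodule.map_mono ih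
      _ ≤ W (k - 2 * n - 2) := h.map_le _
      _ = W (k - 2 * (n + 1 : ℕ)) := by
        congr 1
        push_cast
        ring

theorem eq_inf_comap_pow (h : IsWeightFiltration N W) (ℓ : ℕ) :
    W (ℓ - 1) = W ℓ ⊓ (W (-ℓ - 1)).comap (N ^ ℓ) := by
  apply le_antisymm
  · refine le_inf (h.monotone (by lia)) (Submodule.map_le_iff_le_comap.1 ?_)
    exact (h.map_pow_le ℓ _).trans (h.monotone (by lia))
  · rintro v ⟨hv, hNv⟩
    exact (h.2.2.2.2 ℓ ℓ.cast_nonneg).2 v hv hNv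

theorem neg_eq_map_pow_sup (h : IsWeightFiltration N W) (ℓ : ℕ) :
    W (-ℓ) = (W ℓ).map (N ^ ℓ) ⊔ W (-ℓ - 1) := by
  apply le_antisymm
  · intro w hw
    obtain ⟨v, hv, hvw⟩ := (h.2.2.2.2 ℓ ℓ.cast_nonneg).1 w hw
    exact Submodule.mem_sup.2
      ⟨(N ^ ℓ) v, Submodule.mem_map_of_mem hv, -((N ^ ℓ) v - w), neg_mem hvw, by abel⟩
  · exact sup_le ((h.map_pow_le ℓ _).trans (h.monotone (by lia))) (h.monotone (by lia))

theorem eventually_eq_top_and_eq_bot (h : IsWeightFiltration N W) :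
    ∀ᶠ ℓ : ℕ in atTop, W ℓ = ⊤ ∧ W (-ℓ - 1) = ⊥ := by
  have hneg : Tendsto (fun ℓ : ℕ ↦ -(ℓ : ℤ) - 1) atTop atBot :=
    tendsto_atBot_add_const_right _ (-1)
      (tendsto_neg_atTop_atBot.comp tendsto_natCast_atTop_atTop)
  exact (tendsto_natCast_atTop_atTop.eventually h.eventually_eq_top).and
    (hneg.eventually h.eventually_eq_bot)

theorem eq_sub_one_and_eq_neg (h : IsWeightFiltration N W) (h' : IsWeightFiltration N W') {ℓ : ℕ}
    (hpos : W ℓ = W' ℓ) (hneg : W (-ℓ - 1) = W' (-ℓ - 1)) :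
    W (ℓ - 1) = W' (ℓ - 1) ∧ W (-ℓ) = W' (-ℓ) := by
  constructor
  · rw [h.eq_inf_comap_pow, h'.eq_inf_comap_pow, hpos, hneg]
  · rw [h.neg_eq_map_pow_sup, h'.neg_eq_map_pow_sup, hpos, hneg]

theorem eq_natCast_and_eq_neg_sub_one (h : IsWeightFiltration N W)
    (h' : IsWeightFiltration N W') (n : ℕ) :
    W n = W' n ∧ W (-n - 1) = W' (-n - 1) := by
  have heventually : ∀ᶠ ℓ : ℕ in atTop, W ℓ = W' ℓ ∧ W (-ℓ - 1) = W' (-ℓ - 1) := by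
    filter_upwards [h.eventually_eq_top_and_eq_bot, h'.eventually_eq_top_and_eq_bot]
      with ℓ ⟨htop, hbot⟩ ⟨htop', hbot'⟩
    exact ⟨htop.trans htop'.symm, hbot.trans hbot'.symm⟩
  have hstep (ℓ : ℕ) (hℓ : W (ℓ + 1 : ℕ) = W' (ℓ + 1 : ℕ) ∧
      W (-(ℓ + 1 : ℕ) - 1) = W' (-(ℓ + 1 : ℕ) - 1)) :
      W ℓ = W' ℓ ∧ W (-ℓ - 1) = W' (-ℓ - 1) := by
    simpa only [Nat.cast_succ, add_sub_cancel_right, neg_add'] using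
      h.eq_sub_one_and_eq_neg h' hℓ.1 hℓ.2
  exact Nat.decreasing_induction_of_infinite hstep
    (Nat.frequently_atTop_iff_infinite.1 heventually.frequently) n

end IsWeightFiltration

theorem weight_filtration_unique_general {K V : Type*} [Field K] [AddCommGroup V] [Module K V]
    (N : Module.End K V) (W W' : ℤ → Submodule K V)
    (hW : IsWeightFiltration N W) (hW' : IsWeightFiltration N W') : W = W' := by
  funext k
  cases k with
  | ofNat n => exact (hW.eq_natCast_and_eq_neg_sub_one hW' n).1
  | negSucc n =>
    rw [Int.negSucc_eq, neg_add']
    exact (hW.eq_natCast_and_eq_neg_sub_one hW' n).2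

/-- There is at most one monodromy weight filtration of a nilpotent endomorphism of a
finite-dimensional complex vector space. -/
theorem weight_filtration_unique {V : Type*} [AddCommGroup V] [Module ℂ V]
    [FiniteDimensional ℂ V] (N : Module.End ℂ V) (hN : IsNilpotent N)
    (W W' : ℤ → Submodule ℂ V)
    (hW : IsWeightFiltration N W) (hW' : IsWeightFiltration N W') : W = W' :=
  weight_filtration_unique_general N W W' hW hW'
end

section
/- Let W be an increasing filtration of a finite-dimensional vector space V and let N be a nilpotent endomorphism of V preserving W. Then there exists at most one increasing filtration M of V (the relative weight filtration) such that (i) N maps M_k into M_{k-2} for all k, and (ii) for each k, the filtration induced by M on Gr^W_k equals the monodromy weight filtration of the induced nilpotent map N on Gr^W_k, shifted by k (i.e. M induces W(N : Gr^W_k → Gr^W_k)[-k]). -/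
section
variable {K V : Type*} [Field K] [AddCommGroup V] [Module K V]

/-- The graded piece `Gr^W_k = W_k / W_{k-1}`. -/
abbrev GrPiece (W : ℤ → Submodule K V) (k : ℤ) :=
  W k ⧸ (Submodule.comap (W k).subtype (W (k - 1)))

/-- The endomorphism induced on `Gr^W_k` by an endomorphism `N` preserving `W`. -/
noncomputable def grEnd (W : ℤ → Submodule K V) (N : Module.End K V) (k : ℤ)
    (h1 : ∀ x ∈ W k, N x ∈ W k) (h2 : ∀ x ∈ W (k - 1), N x ∈ W (k - 1)) :
    Module.End K (GrPiece W k) :=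
  Submodule.mapQ _ _ (N.restrict h1) (by
    intro x hx
    simp only [Submodule.mem_comap, LinearMap.restrict_apply] at *
    exact h2 _ hx)

/-- The filtration induced by `M` on `Gr^W_k` (image of `M j ∩ W k`). -/
def inducedFil (W M : ℤ → Submodule K V) (k j : ℤ) : Submodule K (GrPiece W k) :=
  ((M j).comap (W k).subtype).map (Submodule.mkQ _)

/-- `M` is a relative weight filtration of `N` with respect to `W`:
`N` shifts `M` by `-2`, and `M` induces on each `Gr^W_k` the monodromy weight filtration of the
induced nilpotent endomorphism, shifted by `k` (`M` induces `W(N : Gr^W_k → Gr^W_k)[-k]`,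
i.e. `j ↦ (induced filtration)_{j+k}` is the monodromy weight filtration on `Gr^W_k`). -/
def IsRelWeightFiltration (W : ℤ → Submodule K V) (N : Module.End K V)
    (hNW : ∀ k, ∀ x ∈ W k, N x ∈ W k) (M : ℤ → Submodule K V) : Prop :=
  Monotone M ∧
  (∃ a : ℤ, ∀ k ≤ a, M k = ⊥) ∧
  (∃ b : ℤ, ∀ k, b ≤ k → M k = ⊤) ∧
  (∀ k : ℤ, ∀ v ∈ M k, N v ∈ M (k - 2)) ∧
  (∀ k : ℤ, IsWeightFiltration (grEnd W N k (hNW k) (hNW (k - 1)))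
      (fun j => inducedFil W M k (j + k)))

end

/-!
On `W k`, a relative weight filtration `M` is determined by its restriction to `W (k - 1)`. Indeed,
for every natural number `m`,
* `W k ∩ M (k + m) = W k ∩ (N ^ (m + 1))⁻¹ (W k ∩ M (k - m - 2))`,
* `W k ∩ M (k - m) = N ^ m (W k ∩ M (k + m)) + W (k - 1) ∩ M (k - m)`.

Since `M` vanishes in low degrees, one can ascend: the piece of degree `k - m - 2` determines that
of degree `k + m`, which in turn determines that of degree `k - m`.
-/

theorem pow_apply_mem_sub_nsmul {R V ι : Type*} [Semiring R] [AddCommMonoid V] [Module R V]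
    [AddGroup ι] {N : Module.End R V} {M : ι → Submodule R V} {d : ι}
    (hN : ∀ i, ∀ v ∈ M i, N v ∈ M (i - d)) (m : ℕ) {i : ι} {v : V} (hv : v ∈ M i) :
    (N ^ m) v ∈ M (i - m • d) := by
  induction m with
  | zero => simpa using hv
  | succ m ih =>
    rw [pow_succ', Module.End.mul_apply, succ_nsmul', sub_add_eq_sub_sub_swap]
    exact hN _ _ ih

section

variable {K V : Type*} [Field K] [AddCommGroup V] [Module K V]
  {W M M' : ℤ → Submodule K V} {N : Module.End K V}

theorem mk_mem_inducedFil_iff {k j : ℤ} (v : W k) :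
    (Submodule.Quotient.mk v : GrPiece W k) ∈ inducedFil W M k j ↔
      (v : V) ∈ W k ⊓ M j ⊔ W (k - 1) := by
  constructor
  · rintro ⟨u, hu, huv⟩
    have hvu : v - u ∈ (W (k - 1)).comap (W k).subtype := (Submodule.Quotient.eq _).1 huv.symm
    exact Submodule.mem_sup.2 ⟨u, ⟨u.2, hu⟩, v - u, hvu, add_sub_cancel _ _⟩
  · intro hv
    obtain ⟨u, ⟨huW, hu⟩, w, hw, huw⟩ := Submodule.mem_sup.1 hv
    have hvu : v - ⟨u, huW⟩ ∈ (W (k - 1)).comap (W k).subtype := by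
      simpa [← huw] using hw
    exact ⟨⟨u, huW⟩, hu, ((Submodule.Quotient.eq _).2 hvu).symm⟩

theorem grEnd_pow_mk {k : ℤ} (h1 : ∀ x ∈ W k, N x ∈ W k)
    (h2 : ∀ x ∈ W (k - 1), N x ∈ W (k - 1)) (m : ℕ) (v : W k) :
    (grEnd W N k h1 h2 ^ m) (Submodule.Quotient.mk v) = Submodule.Quotient.mk
      ⟨(N ^ m) v, Module.End.pow_apply_mem_of_forall_mem m h1 v v.2⟩ := by
  rw [grEnd, ← Submodule.mapQ_pow, Submodule.mapQ_apply, Module.End.pow_restrict]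
  rfl

namespace IsRelWeightFiltration

variable {hNW : ∀ k, ∀ x ∈ W k, N x ∈ W k}

theorem pow_apply_mem (hM : IsRelWeightFiltration W N hNW M) {m : ℕ} {i j : ℤ}
    (hij : i ≤ j + 2 * m) {v : V} (hv : v ∈ M i) : (N ^ m) v ∈ M j := by
  obtain ⟨hmono, -, -, hshift, -⟩ := hM
  have hle : i - m • (2 : ℤ) ≤ j := by rw [nsmul_eq_mul]; omega
  exact hmono hle (pow_apply_mem_sub_nsmul hshift m hv)

theorem mem_inf_sup_of_pow_apply_mem (hM : IsRelWeightFiltration W N hNW M) {k : ℤ} {m : ℕ}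
    {v : V} (hvW : v ∈ W k) (hv : v ∈ M (k + m)) (hNv : (N ^ m) v ∈ M (k - m - 1)) :
    v ∈ W k ⊓ M (k + m - 1) ⊔ W (k - 1) := by
  obtain ⟨-, -, -, -, hgr⟩ := hM
  obtain ⟨-, -, -, -, hiso⟩ := hgr k
  have hinj := (hiso m (by positivity)).2 (Submodule.Quotient.mk ⟨v, hvW⟩)
  simp only [Int.toNat_natCast, grEnd_pow_mk, mk_mem_inducedFil_iff] at hinj
  rw [show (m : ℤ) + k = k + m by ring, show -(m : ℤ) - 1 + k = k - m - 1 by ring,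
    show (m : ℤ) - 1 + k = k + m - 1 by ring] at hinj
  have hNvW := Module.End.pow_apply_mem_of_forall_mem m (hNW k) v hvW
  exact hinj (Submodule.mem_sup_left ⟨hvW, hv⟩) (Submodule.mem_sup_left ⟨hNvW, hNv⟩)

theorem inf_le_map_pow_sup_inf_sup (hM : IsRelWeightFiltration W N hNW M) (k : ℤ) (m : ℕ) :
    W k ⊓ M (k - m) ≤
      (W k ⊓ M (k + m)).map (N ^ m) ⊔ (W k ⊓ M (k - m - 1) ⊔ W (k - 1)) := by
  rintro w ⟨hwW, hw⟩
  obtain ⟨-, -, -, -, hgr⟩ := hM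
  obtain ⟨-, -, -, -, hiso⟩ := hgr k
  have hsurj := (hiso m (by positivity)).1 (Submodule.Quotient.mk ⟨w, hwW⟩)
  simp only [mk_mem_inducedFil_iff] at hsurj
  rw [show -(m : ℤ) + k = k - m by ring, show -(m : ℤ) - 1 + k = k - m - 1 by ring,
    show (m : ℤ) + k = k + m by ring] at hsurj
  obtain ⟨_, ⟨v, hv, rfl⟩, hvw⟩ := hsurj (Submodule.mem_sup_left ⟨hwW, hw⟩)
  rw [Submodule.mkQ_apply, Int.toNat_natCast, grEnd_pow_mk, ← Submodule.Quotient.mk_sub,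
    mk_mem_inducedFil_iff] at hvw
  exact Submodule.mem_sup.2
    ⟨(N ^ m) v, Submodule.mem_map_of_mem ⟨v.2, hv⟩, _, neg_mem hvw, by simp⟩

theorem mem_sub_one_of_pow_apply_mem (hM : IsRelWeightFiltration W N hNW M)
    (hWbot : ∃ a : ℤ, ∀ k ≤ a, W k = ⊥) {k i : ℤ} {m : ℕ} (hi : k + m ≤ i) {v : V}
    (hvW : v ∈ W k) (hv : v ∈ M i) (hNv : (N ^ m) v ∈ M (i - 2 * m - 1)) : v ∈ M (i - 1) := by
  obtain ⟨a, ha⟩ := hWbot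
  have hmono : Monotone M := hM.1
  induction k using Int.strongRec (m := a) generalizing v with
  | lt k hk =>
    rw [ha k hk.le, Submodule.mem_bot] at hvW
    exact hvW ▸ zero_mem _
  | ge k _ ih =>
    obtain ⟨e, he⟩ : ∃ e : ℕ, i = k + e := ⟨(i - k).toNat, by omega⟩
    have hme : m ≤ e := by omega
    -- The relevant power of `N` on `Gr^W_k` is the `e`-th, and it factors through `N ^ m`.
    have hpow : (N ^ e) v ∈ M (k - e - 1) := by
      rw [← Nat.sub_add_cancel hme, pow_add, Module.End.mul_apply]
      exact hM.pow_apply_mem (by omega) hNv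
    obtain ⟨u, ⟨-, hu⟩, w, hw, rfl⟩ :=
      Submodule.mem_sup.1 (hM.mem_inf_sup_of_pow_apply_mem hvW (he ▸ hv) hpow)
    rw [← he] at hu
    have hwi : w ∈ M i := (add_mem_cancel_left (hmono (by omega) hu)).1 hv
    have hNw : (N ^ m) w ∈ M (i - 2 * m - 1) := by
      rw [map_add] at hNv
      exact (add_mem_cancel_left (hM.pow_apply_mem (by omega) hu)).1 hNv
    exact add_mem hu (ih (k - 1) (by omega) (by omega) hw hwi hNw)

theorem mem_of_pow_apply_mem (hM : IsRelWeightFiltration W N hNW M)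
    (hWbot : ∃ a : ℤ, ∀ k ≤ a, W k = ⊥) {k j : ℤ} {m : ℕ} (hj : k + m ≤ j + 1) {v : V}
    (hvW : v ∈ W k) (hNv : (N ^ m) v ∈ M (j - 2 * m)) : v ∈ M j := by
  have ⟨hmono, _, ⟨b, hb⟩, _⟩ := hM
  have descend (i : ℤ) (hji : j ≤ i) (hv : v ∈ M i) : v ∈ M j := by
    induction i, hji using Int.leInduction with
    | base => exact hv
    | succ i hji ih =>
      have hNv' : (N ^ m) v ∈ M (i + 1 - 2 * m - 1) := hmono (by omega) hNv
      have := hM.mem_sub_one_of_pow_apply_mem hWbot (by omega) hvW hv hNv'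
      exact ih (by rwa [add_sub_cancel_right] at this)
  exact descend (max j b) (le_max_left _ _) (by simp [hb _ (le_max_right j b)])

theorem inf_eq_inf_comap_pow (hM : IsRelWeightFiltration W N hNW M)
    (hWbot : ∃ a : ℤ, ∀ k ≤ a, W k = ⊥) (k : ℤ) (m : ℕ) :
    W k ⊓ M (k + m) = W k ⊓ (W k ⊓ M (k - m - 2)).comap (N ^ (m + 1)) := by
  ext v
  refine and_congr_right fun hvW => ⟨fun hv => ⟨?_, ?_⟩, fun hv => ?_⟩
  · exact Module.End.pow_apply_mem_of_forall_mem _ (hNW k) v hvW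
  · exact hM.pow_apply_mem (by push_cast; omega) hv
  · have hdeg : k + (m : ℤ) - 2 * (m + 1 : ℕ) = k - m - 2 := by push_cast; ring
    exact hM.mem_of_pow_apply_mem hWbot (by push_cast; omega) hvW (hdeg ▸ hv.2)

theorem inf_le_map_pow_sup (hM : IsRelWeightFiltration W N hNW M) (k : ℤ) (m : ℕ) :
    W k ⊓ M (k - m) ≤ (W k ⊓ M (k + m)).map (N ^ m) ⊔ W (k - 1) := by
  have ⟨hmono, ⟨a, ha⟩, _, hshift, _⟩ := hM
  induction hj : k - m using Int.strongRec (m := a) generalizing m with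
  | lt j hja => simp [ha j hja.le]
  | ge j _ ih =>
    subst hj
    have hlower : W k ⊓ M (k - m - 1) ≤ (W k ⊓ M (k + m)).map (N ^ m) ⊔ W (k - 1) := by
      have hmap : (W k ⊓ M (k + (m + 1 : ℕ))).map N ≤ W k ⊓ M (k + m) := by
        rintro _ ⟨v, ⟨hvW, hv⟩, rfl⟩
        exact ⟨hNW k v hvW, hmono (by push_cast; omega) (hshift _ v hv)⟩
      calc W k ⊓ M (k - m - 1)
          ≤ (W k ⊓ M (k + (m + 1 : ℕ))).map (N ^ (m + 1)) ⊔ W (k - 1) :=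
            ih _ (by omega) (m + 1) (by push_cast; omega)
        _ = ((W k ⊓ M (k + (m + 1 : ℕ))).map N).map (N ^ m) ⊔ W (k - 1) := by
            rw [pow_succ, Module.End.mul_eq_comp, Submodule.map_comp]
        _ ≤ (W k ⊓ M (k + m)).map (N ^ m) ⊔ W (k - 1) :=
            sup_le_sup_right (Submodule.map_mono hmap) _
    exact (hM.inf_le_map_pow_sup_inf_sup k m).trans
      (sup_le le_sup_left (sup_le hlower le_sup_right))

theorem inf_eq_map_pow_sup (hM : IsRelWeightFiltration W N hNW M) (hWmono : Monotone W) (k : ℤ)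
    (m : ℕ) :
    W k ⊓ M (k - m) = (W k ⊓ M (k + m)).map (N ^ m) ⊔ W (k - 1) ⊓ M (k - m) := by
  have hmap : (W k ⊓ M (k + m)).map (N ^ m) ≤ W k ⊓ M (k - m) := by
    rintro _ ⟨v, ⟨hvW, hv⟩, rfl⟩
    exact ⟨Module.End.pow_apply_mem_of_forall_mem m (hNW k) v hvW,
      hM.pow_apply_mem (by omega) hv⟩
  apply le_antisymm
  · rw [← sup_inf_assoc_of_le _ (hmap.trans inf_le_right)]
    exact le_inf (hM.inf_le_map_pow_sup k m) inf_le_right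
  · exact sup_le hmap (inf_le_inf_right _ (hWmono (by omega)))

theorem inf_eq_inf_of_pred (hM : IsRelWeightFiltration W N hNW M)
    (hM' : IsRelWeightFiltration W N hNW M') (hWmono : Monotone W)
    (hWbot : ∃ a : ℤ, ∀ k ≤ a, W k = ⊥) {k : ℤ}
    (hpred : ∀ j, W (k - 1) ⊓ M j = W (k - 1) ⊓ M' j) (j : ℤ) : W k ⊓ M j = W k ⊓ M' j := by
  have upper (m : ℕ) (h : W k ⊓ M (k - m - 2) = W k ⊓ M' (k - m - 2)) :
      W k ⊓ M (k + m) = W k ⊓ M' (k + m) := by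
    rw [hM.inf_eq_inf_comap_pow hWbot, h, ← hM'.inf_eq_inf_comap_pow hWbot]
  have lower (m : ℕ) (h : W k ⊓ M (k + m) = W k ⊓ M' (k + m)) :
      W k ⊓ M (k - m) = W k ⊓ M' (k - m) := by
    rw [hM.inf_eq_map_pow_sup hWmono, h, hpred, ← hM'.inf_eq_map_pow_sup hWmono]
  have ⟨_, ⟨a, ha⟩, _⟩ := hM
  have ⟨_, ⟨a', ha'⟩, _⟩ := hM'
  induction j using Int.strongRec (m := min a a') with
  | lt j hj => rw [ha j (by omega), ha' j (by omega)]
  | ge j _ ih =>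
    rcases lt_or_ge k j with hkj | hjk
    · obtain ⟨m, rfl⟩ := Int.le.dest hkj.le
      exact upper m (ih _ (by omega))
    · obtain ⟨m, rfl⟩ : ∃ m : ℕ, j = k - m := ⟨(k - j).toNat, by omega⟩
      exact lower m (upper m (ih _ (by omega)))

theorem inf_eq_inf (hM : IsRelWeightFiltration W N hNW M)
    (hM' : IsRelWeightFiltration W N hNW M') (hWmono : Monotone W)
    (hWbot : ∃ a : ℤ, ∀ k ≤ a, W k = ⊥) (k j : ℤ) : W k ⊓ M j = W k ⊓ M' j := by
  have ⟨a, ha⟩ := hWbot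
  induction k using Int.strongRec (m := a) generalizing j with
  | lt k hk => simp only [ha k hk.le, bot_inf_eq]
  | ge k _ ih => exact hM.inf_eq_inf_of_pred hM' hWmono hWbot (ih (k - 1) (by omega)) j

end IsRelWeightFiltration

theorem relative_weight_filtration_unique_general (hWmono : Monotone W)
    (hWbot : ∃ a : ℤ, ∀ k ≤ a, W k = ⊥) (hWtop : ⨆ k, W k = ⊤)
    (hNW : ∀ k, ∀ x ∈ W k, N x ∈ W k) (hM : IsRelWeightFiltration W N hNW M)
    (hM' : IsRelWeightFiltration W N hNW M') : M = M' := by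
  ext j v
  have hv : v ∈ ⨆ k, W k := hWtop ▸ Submodule.mem_top
  obtain ⟨k, hvW⟩ := (Submodule.mem_iSup_of_directed W hWmono.directed_le).1 hv
  have hmem := SetLike.ext_iff.1 (hM.inf_eq_inf hM' hWmono hWbot k j) v
  simpa only [Submodule.mem_inf, hvW, true_and] using hmem

end

/-- There is at most one relative weight filtration of a nilpotent endomorphism `N` preserving
an increasing filtration `W` of a finite-dimensional vector space in characteristic zero. -/
theorem relative_weight_filtration_unique {K V : Type*} [Field K] [CharZero K]
    [AddCommGroup V] [Module K V] [FiniteDimensional K V]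
    (W : ℤ → Submodule K V) (hWmono : Monotone W)
    (hWbot : ∃ a : ℤ, ∀ k ≤ a, W k = ⊥) (hWtop : ∃ b : ℤ, ∀ k, b ≤ k → W k = ⊤)
    (N : Module.End K V) (hNnil : IsNilpotent N)
    (hNW : ∀ k, ∀ x ∈ W k, N x ∈ W k)
    (M M' : ℤ → Submodule K V)
    (hM : IsRelWeightFiltration W N hNW M)
    (hM' : IsRelWeightFiltration W N hNW M') : M = M' :=
  let ⟨b, hb⟩ := hWtop
  relative_weight_filtration_unique_general hWmono hWbot
    (top_unique (hb b le_rfl ▸ le_iSup W b)) hNW hM hM'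
end

section
/- Let g be a finite-dimensional nilpotent Lie algebra of endomorphisms of a vector space V, with a decreasing chain of ideals g = Lie_{-1} ⊇ Lie_{-2} ⊇ ⋯ ⊇ Lie_{-r} = 0 satisfying [Lie_{-p}, Lie_{-q}] ⊆ Lie_{-p-q}, and suppose g = a ⊕ b ⊕ c as a direct sum of vector subspaces, where a, b, c are Lie subalgebras each compatible with the filtration. Then for every α ∈ g there exist γ ∈ a, λ ∈ b, φ ∈ c such that exp(α) = exp(γ)exp(λ)exp(φ), and moreover γ ≡ π_a(α), λ ≡ π_b(α), φ ≡ π_c(α) modulo Lie_{-2}, where π_a, π_b, π_c are the projections associated to the direct sum decomposition. -/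
/-- Truncated exponential, equal to the exponential for nilpotent endomorphisms of a
finite-dimensional space. -/
noncomputable def expNil {V : Type*} [AddCommGroup V] [Module ℂ V] (α : Module.End ℂ V) :
    Module.End ℂ V :=
  ∑ i ∈ Finset.range (Module.finrank ℂ V + 1), ((i.factorial : ℂ))⁻¹ • α ^ i

/-!
A polynomial path `G` with `G(0) = 1` and `G' = w G` is a product of exponentials
`exp (t c₁) exp (t² c₂) ⋯`: multiplying `G` by a suitable exponential strips off the lowest term of
`w`, up to conjugation, and raises its order. If the coefficient of `tⁱ` in `w` lies in the
filtration step `i + 1`, so does that of the new `w`, and the process stops. Applied to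
`exp (t x) exp (t y) exp (-t (x + y))`, this gives `exp x exp y = exp c₁ ⋯ exp cₘ exp (x + y)` with
all `cᵢ` one filtration step deeper than `x`, and descending induction along the filtration absorbs
the `exp cᵢ` into a single exponential.
This is the only part of the Campbell-Baker-Hausdorff theorem that is needed: changing the factors
of a product of exponentials by elements of a given step changes its logarithm by their sum, modulo
the next step, so the factorization is found by successive approximation.
-/

open Polynomial IsNilpotent

section Exp

variable {B : Type*} [Ring B]

theorem commute_exp [Module ℚ B] {x y : B} (h : Commute x y) : Commute (exp x) y :=
  Commute.sum_left _ _ _ fun i _ => (h.pow_left i).smul_left _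

theorem exp_apply_sub_self_mem {R M : Type*} [Ring R] [Module ℚ R] [AddCommGroup M] [Module R M]
    [Module ℚ M] {f : Module.End ℚ M} (hf : IsNilpotent f) {S T : Submodule R M} (hTS : T ≤ S)
    (hST : ∀ w ∈ S, f w ∈ T) {w : M} (hw : w ∈ S) : exp f w - w ∈ T := by
  have hpow (i : ℕ) : (f ^ (i + 1)) w ∈ T := by
    induction i with
    | zero => simpa using hST w hw
    | succ i ih => rw [_root_.pow_succ']; exact hST _ (hTS ih)
  obtain ⟨k, hk⟩ := hf
  rw [exp_eq_sum (pow_eq_zero_of_le k.le_succ hk), Finset.sum_range_succ', LinearMap.add_apply,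
    LinearMap.sum_apply]
  simp only [LinearMap.smul_apply, Nat.factorial_zero, Nat.cast_one, inv_one, pow_zero,
    Module.End.one_apply, one_smul, add_sub_cancel_right]
  exact T.sum_mem fun i _ => T.smul_of_tower_mem _ (hpow i)

variable [Algebra ℚ B]

theorem exp_mulRight {x : B} (hx : IsNilpotent x) :
    exp (LinearMap.mulRight ℚ x) = LinearMap.mulRight ℚ (exp x) := by
  obtain ⟨k, hk⟩ := hx
  have hk' : LinearMap.mulRight ℚ x ^ k = 0 := by
    rw [LinearMap.pow_mulRight, hk, LinearMap.mulRight_zero_eq_zero]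
  ext w
  simp only [exp_eq_sum hk, exp_eq_sum hk', LinearMap.pow_mulRight, LinearMap.sum_apply,
    LinearMap.smul_apply, LinearMap.mulRight_apply, Finset.mul_sum, mul_smul_comm]

theorem isNilpotent_mulLeft_add_mulRight_neg {x : B} (hx : IsNilpotent x) :
    IsNilpotent (LinearMap.mulLeft ℚ x + LinearMap.mulRight ℚ (-x)) :=
  (LinearMap.commute_mulLeft_right (R := ℚ) x (-x)).isNilpotent_add
    ((LinearMap.isNilpotent_mulLeft_iff ℚ x).2 hx)
    ((LinearMap.isNilpotent_mulRight_iff ℚ (-x)).2 hx.neg)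

theorem exp_mulLeft_add_mulRight_neg_apply {x : B} (hx : IsNilpotent x) (w : B) :
    exp (LinearMap.mulLeft ℚ x + LinearMap.mulRight ℚ (-x)) w = exp x * w * exp (-x) := by
  have hl : exp (LinearMap.mulLeft ℚ x) = LinearMap.mulLeft ℚ (exp x) :=
    (map_exp hx (Algebra.lmul ℚ B)).symm
  rw [exp_add_of_commute (LinearMap.commute_mulLeft_right (R := ℚ) x (-x))
      ((LinearMap.isNilpotent_mulLeft_iff ℚ x).2 hx)
      ((LinearMap.isNilpotent_mulRight_iff ℚ (-x)).2 hx.neg), hl, exp_mulRight hx.neg,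
    Module.End.mul_apply, LinearMap.mulLeft_apply, LinearMap.mulRight_apply, mul_assoc]

theorem exp_neg_eq_of_exp_mul_exp_eq {x y z : B} (hx : IsNilpotent x) (hy : IsNilpotent y)
    (hz : IsNilpotent z) (h : exp x * exp y = exp z) : exp (-z) = exp (-y) * exp (-x) := by
  refine left_inv_eq_right_inv (exp_neg_mul_exp_self hz) ?_
  rw [← h, mul_assoc, ← mul_assoc (exp y), exp_mul_exp_neg_self hy, one_mul,
    exp_mul_exp_neg_self hx]

variable {R : Type*} [Ring R] [Module ℚ R] [Module R B]

theorem exp_mul_mul_exp_neg_sub_mem {x : B} (hx : IsNilpotent x) {S T : Submodule R B}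
    (hTS : T ≤ S) (hST : ∀ w ∈ S, ⁅x, w⁆ ∈ T) {w : B} (hw : w ∈ S) :
    exp x * w * exp (-x) - w ∈ T :=
  exp_mulLeft_add_mulRight_neg_apply hx w ▸
    exp_apply_sub_self_mem (isNilpotent_mulLeft_add_mulRight_neg hx) hTS
      (fun w hw => by simpa [Ring.lie_def, sub_eq_add_neg] using hST w hw) hw

theorem exp_mul_mul_exp_neg_mem {x : B} (hx : IsNilpotent x) {S : Submodule R B}
    (hS : ∀ w ∈ S, ⁅x, w⁆ ∈ S) {w : B} (hw : w ∈ S) : exp x * w * exp (-x) ∈ S := by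
  simpa using add_mem (exp_mul_mul_exp_neg_sub_mem hx le_rfl hS hw) hw

end Exp

section PolynomialExp

variable {A : Type*} [Ring A]

/-- Evaluation of a polynomial at `1`, as a ring homomorphism. The coefficients need not commute,
so that `Polynomial.evalRingHom` does not apply. -/
noncomputable def evalOne : A[X] →+* A :=
  eval₂RingHom' (RingHom.id A) 1 fun a => Commute.one_right a

theorem evalOne_monomial (n : ℕ) (x : A) : evalOne (monomial n x) = x := by
  simp [evalOne, eval₂RingHom']

theorem isNilpotent_monomial {x : A} (hx : IsNilpotent x) (n : ℕ) :
    IsNilpotent (monomial n x) := by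
  obtain ⟨k, hk⟩ := hx
  exact ⟨k, by simp [monomial_pow, hk]⟩

theorem eq_one_of_derivative_eq_zero [IsAddTorsionFree A] {p : A[X]} (hp : derivative p = 0)
    (h0 : constantCoeff p = 1) : p = 1 := by
  rw [eq_C_of_derivative_eq_zero hp, ← constantCoeff_apply, h0, C_1]

variable [Algebra ℚ A]

theorem derivative_exp {p : A[X]} (hp : IsNilpotent p) (hc : Commute p (derivative p)) :
    derivative (exp p) = derivative p * exp p := by
  have hpow (i : ℕ) : derivative (p ^ (i + 1)) = ((i + 1 : ℕ) : ℚ) • (derivative p * p ^ i) := by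
    induction i with
    | zero => simp
    | succ i ih =>
      rw [_root_.pow_succ, derivative_mul, ih, smul_mul_assoc, mul_assoc, ← _root_.pow_succ,
        (hc.pow_left (i + 1)).eq]
      push_cast
      module
  obtain ⟨k, hk⟩ := hp
  conv_lhs => rw [exp_eq_sum (pow_eq_zero_of_le k.le_succ hk), Finset.sum_range_succ']
  rw [exp_eq_sum hk, map_add, map_sum, Finset.mul_sum]
  simp only [pow_zero, derivative_smul, derivative_one, smul_zero, add_zero]
  refine Finset.sum_congr rfl fun i _ => ?_
  rw [hpow, smul_smul, mul_smul_comm, Nat.factorial_succ]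
  congr 1
  push_cast
  field_simp

theorem derivative_exp_monomial {x : A} (hx : IsNilpotent x) (n : ℕ) :
    derivative (exp (monomial n x)) = derivative (monomial n x) * exp (monomial n x) := by
  refine derivative_exp (isNilpotent_monomial hx n) ?_
  rw [derivative_monomial, commute_iff_eq, monomial_mul_monomial, monomial_mul_monomial,
    add_comm n, mul_assoc, Nat.cast_comm]

theorem evalOne_exp_monomial {x : A} (hx : IsNilpotent x) (n : ℕ) :
    evalOne (exp (monomial n x)) = exp x := by
  rw [map_exp (isNilpotent_monomial hx n), evalOne_monomial]

theorem constantCoeff_exp_monomial_succ {x : A} (hx : IsNilpotent x) (n : ℕ) :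
    constantCoeff (exp (monomial (n + 1) x)) = 1 := by
  rw [map_exp (isNilpotent_monomial hx _), constantCoeff_apply,
    coeff_monomial_of_ne x n.succ_ne_zero.symm, exp_zero]

/-- `c Xᵈ⁺¹` is minus the integral of the lowest term of `Xᵈ v`, so that the lowest terms cancel and
`Xᵈ⁺¹` divides the new logarithmic derivative. -/
theorem derivative_exp_monomial_mul {d : ℕ} {c : A} (hc : IsNilpotent c) {G v : A[X]}
    (hG : derivative G = X ^ d * v * G) (hcv : ((d + 1 : ℕ) : ℚ) • c = -v.coeff 0) :
    derivative (exp (monomial (d + 1) c) * G) =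
      X ^ (d + 1) * divX (exp (monomial (d + 1) c) * v * exp (-monomial (d + 1) c)) *
        (exp (monomial (d + 1) c) * G) := by
  have hn := isNilpotent_monomial hc (d + 1)
  have hderiv : derivative (monomial (d + 1) c) = -(X ^ d * C (v.coeff 0)) := by
    rw [derivative_monomial, ← nsmul_eq_mul', ← Nat.cast_smul_eq_nsmul ℚ, hcv, Nat.add_sub_cancel,
      X_pow_mul_C, C_mul_X_pow_eq_monomial, monomial_neg]
  set U := exp (monomial (d + 1) c)
  set U' := exp (-monomial (d + 1) c)
  have hUU : U' * U = 1 := exp_neg_mul_exp_self hn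
  have hcoeff : (U * v * U').coeff 0 = v.coeff 0 := by
    have hU : constantCoeff U = 1 := constantCoeff_exp_monomial_succ hc d
    have hU' : constantCoeff U' = 1 := by
      simpa only [map_mul, hU, mul_one, map_one] using congrArg constantCoeff hUU
    simp only [← constantCoeff_apply, map_mul, hU, hU', one_mul, mul_one]
  calc derivative (U * G)
      = -(X ^ d * C (v.coeff 0)) * U * G + U * X ^ d * v * (U' * U) * G := by
        rw [derivative_mul, derivative_exp_monomial hc, hderiv, hG, hUU]
        noncomm_ring
    _ = X ^ d * (U * v * U' - C (v.coeff 0)) * (U * G) := by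
        rw [← X_pow_mul]
        noncomm_ring
    _ = X ^ (d + 1) * divX (U * v * U') * (U * G) := by
        rw [← hcoeff, sub_eq_of_eq_add (X_mul_divX_add (U * v * U')).symm, _root_.pow_succ]
        simp only [mul_assoc]

theorem derivative_exp_mul_exp_mul_exp_neg_add {x y : A} (hx : IsNilpotent x) (hy : IsNilpotent y)
    (hxy : IsNilpotent (x + y)) :
    derivative (exp (monomial 1 x) * exp (monomial 1 y) * exp (monomial 1 (-(x + y)))) =
      exp (monomial 1 x) * (C x - exp (monomial 1 y) * C x * exp (-monomial 1 y)) *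
        exp (-monomial 1 x) *
        (exp (monomial 1 x) * exp (monomial 1 y) * exp (monomial 1 (-(x + y)))) := by
  have hderiv {z : A} (hz : IsNilpotent z) :
      derivative (exp (monomial 1 z)) = C z * exp (monomial 1 z) := by
    simp [derivative_exp_monomial hz]
  have hcomm (z : A) : exp (monomial 1 z) * C z = C z * exp (monomial 1 z) :=
    commute_exp (by simp [commute_iff_eq, C_mul_monomial, monomial_mul_C])
  have hU := exp_neg_mul_exp_self (isNilpotent_monomial hx 1)
  have hE := exp_neg_mul_exp_self (isNilpotent_monomial hy 1)
  rw [derivative_mul, derivative_mul, hderiv hx, hderiv hy, hderiv hxy.neg, C_neg, C_add,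
    ← hcomm x, ← hcomm y]
  set U := exp (monomial 1 x)
  set E := exp (monomial 1 y)
  set S := exp (monomial 1 (-(x + y)))
  set U' := exp (-monomial 1 x)
  set E' := exp (-monomial 1 y)
  calc (U * C x * E + U * (E * C y)) * S + U * E * (-(C x + C y) * S)
      = U * (C x * E - E * C x * (E' * E)) * S := by rw [hE]; noncomm_ring
    _ = U * (C x - E * C x * E') * (U' * U) * (E * S) := by rw [hU]; noncomm_ring
    _ = U * (C x - E * C x * E') * U' * (U * E * S) := by simp only [mul_assoc]

end PolynomialExp

section CoeffsIn

variable {K A : Type*} [Ring K] [Ring A] [Module K A]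

/-- The polynomials whose coefficient of `Xⁱ` lies in `S i` for every `i`. -/
def coeffsIn (S : ℕ → Submodule K A) : Submodule K A[X] where
  carrier := {p | ∀ i, p.coeff i ∈ S i}
  add_mem' hp hq i := by simpa using add_mem (hp i) (hq i)
  zero_mem' i := by simp
  smul_mem' c p hp i := by simpa using (S i).smul_mem c (hp i)

theorem coeffsIn_mono {S T : ℕ → Submodule K A} (h : S ≤ T) : coeffsIn S ≤ coeffsIn T :=
  fun _ hp i => h i (hp i)

theorem C_mem_coeffsIn {S : ℕ → Submodule K A} {x : A} (hx : x ∈ S 0) : C x ∈ coeffsIn S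
  | 0 => by simpa using hx
  | i + 1 => by simp

theorem lie_monomial_mem_coeffsIn {S T : ℕ → Submodule K A} {n : ℕ} {x : A}
    (h : ∀ i, ∀ y ∈ S i, ⁅x, y⁆ ∈ T (i + n)) {p : A[X]} (hp : p ∈ coeffsIn S) :
    ⁅monomial n x, p⁆ ∈ coeffsIn T := by
  intro i
  rw [Ring.lie_def, coeff_sub]
  obtain hi | ⟨j, rfl⟩ := (lt_or_ge i n).imp_right Nat.exists_eq_add_of_le'
  · rw [← C_mul_X_pow_eq_monomial, mul_assoc, X_pow_mul, ← mul_assoc, coeff_mul_X_pow',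
      ← mul_assoc, coeff_mul_X_pow', if_neg hi.not_ge, if_neg hi.not_ge, sub_zero]
    exact zero_mem _
  · rw [coeff_monomial_mul, coeff_mul_monomial, ← Ring.lie_def]
    exact h j _ (hp j)

theorem exp_monomial_mul_mul_exp_neg_mem_coeffsIn [Module ℚ K] [Algebra ℚ A]
    {S : ℕ → Submodule K A} {n : ℕ} {x : A} (hx : IsNilpotent x)
    (hS : ∀ i, ∀ y ∈ S i, ⁅x, y⁆ ∈ S (i + n)) {p : A[X]} (hp : p ∈ coeffsIn S) :
    exp (monomial n x) * p * exp (-monomial n x) ∈ coeffsIn S :=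
  exp_mul_mul_exp_neg_mem (isNilpotent_monomial hx n)
    (fun _ hw => lie_monomial_mem_coeffsIn hS hw) hp

end CoeffsIn

/-- A decreasing family of submodules with `L r = 0` and `[L p, L q] ⊆ L (p + q)`, whose elements
from `L 1` on are nilpotent; `L k` is the step `Lie_{-k}` of a filtered Lie algebra `L 1`. -/
structure IsNilpotentFiltration {K A : Type*} [Ring K] [Ring A] [Module K A]
    (L : ℕ → Submodule K A) (r : ℕ) : Prop where
  isNilpotent : ∀ x ∈ L 1, IsNilpotent x
  antitone : Antitone L
  eq_bot : L r = ⊥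
  lie_mem : ∀ p q, ∀ x ∈ L p, ∀ y ∈ L q, ⁅x, y⁆ ∈ L (p + q)

namespace IsNilpotentFiltration

section Basic

variable {K A : Type*} [Ring K] [Ring A] [Module K A] {L : ℕ → Submodule K A} {r k : ℕ} {x y : A}

theorem eq_zero_of_mem (hL : IsNilpotentFiltration L r) (hk : r ≤ k) (hx : x ∈ L k) : x = 0 :=
  (Submodule.mem_bot K).1 (hL.eq_bot ▸ hL.antitone hk hx)

theorem mem_one_of_smodEq (hL : IsNilpotentFiltration L r) (hk : 1 ≤ k) (h : x ≡ y [SMOD L k])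
    (hy : y ∈ L 1) : x ∈ L 1 := by
  simpa using add_mem (hL.antitone hk (SModEq.sub_mem.1 h)) hy

theorem inf (hL : IsNilpotentFiltration L r) (k : ℕ) :
    IsNilpotentFiltration (fun i => L i ⊓ L k) r where
  isNilpotent x hx := hL.isNilpotent x hx.1
  antitone p q hpq := inf_le_inf_right _ (hL.antitone hpq)
  eq_bot := by simp only [hL.eq_bot, bot_inf_eq]
  lie_mem p q x hx y hy :=
    ⟨hL.lie_mem p q x hx.1 y hy.1, hL.antitone (Nat.le_add_left k p) (hL.lie_mem p k x hx.1 y hy.2)⟩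

end Basic

variable {K A : Type*} [Ring K] [Module ℚ K] [Ring A] [Module K A] [Algebra ℚ A]
  {L : ℕ → Submodule K A} {r k : ℕ} {x y z : A}

theorem evalOne_mem_closure_exp (hL : IsNilpotentFiltration L r) {d : ℕ} {G v : A[X]}
    (hv : v ∈ coeffsIn fun i => L (i + (d + 1))) (hG : derivative G = X ^ d * v * G)
    (hG0 : constantCoeff G = 1) : evalOne G ∈ Submonoid.closure (exp '' (L 1 : Set A)) := by
  obtain ⟨n, hn⟩ : ∃ n, r ≤ n + (d + 1) := ⟨r, Nat.le_add_right _ _⟩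
  induction n generalizing d G v with
  | zero =>
    have : IsAddTorsionFree A := IsAddTorsionFree.of_module_rat A
    have hv0 : v = 0 := ext fun i => hL.eq_zero_of_mem (by lia) (hv i)
    rw [eq_one_of_derivative_eq_zero (by rw [hG, hv0, mul_zero, zero_mul]) hG0, map_one]
    exact one_mem _
  | succ n ih =>
    obtain ⟨c, hcL, hcv⟩ : ∃ c ∈ L (d + 1), ((d + 1 : ℕ) : ℚ) • c = -v.coeff 0 := by
      refine ⟨-((d + 1 : ℕ) : ℚ)⁻¹ • v.coeff 0,
        (L _).smul_of_tower_mem _ (zero_add (d + 1) ▸ hv 0), ?_⟩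
      rw [smul_smul, mul_neg, mul_inv_cancel₀ (by positivity), neg_one_smul]
    have hcL1 : c ∈ L 1 := hL.antitone (Nat.le_add_left 1 d) hcL
    have hc := hL.isNilpotent c hcL1
    have hconj := exp_monomial_mul_mul_exp_neg_mem_coeffsIn (n := d + 1) hc
      (fun i y hy => add_comm (d + 1) _ ▸ hL.lie_mem _ _ c hcL y hy) hv
    have hdiv : divX (exp (monomial (d + 1) c) * v * exp (-monomial (d + 1) c)) ∈
        coeffsIn fun i => L (i + (d + 1 + 1)) := fun i => by
      simpa only [coeff_divX, add_assoc, add_comm 1] using hconj (i + 1)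
    have hG' : evalOne G = exp (-c) * evalOne (exp (monomial (d + 1) c) * G) := by
      rw [map_mul, evalOne_exp_monomial hc, ← mul_assoc, exp_neg_mul_exp_self hc, one_mul]
    rw [hG']
    refine mul_mem (Submonoid.subset_closure ⟨-c, neg_mem hcL1, rfl⟩)
      (ih hdiv (derivative_exp_monomial_mul hc hG hcv) ?_ (by lia))
    rw [map_mul, constantCoeff_exp_monomial_succ hc, hG0, one_mul]

theorem exp_mul_exp_mul_exp_neg_add_mem_closure (hL : IsNilpotentFiltration L r) (hk : 1 ≤ k)
    (hx : x ∈ L k) (hy : y ∈ L 1) :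
    exp x * exp y * exp (-(x + y)) ∈ Submonoid.closure (exp '' (L (k + 1) : Set A)) := by
  have hx1 := hL.antitone hk hx
  have hxn := hL.isNilpotent x hx1
  have hyn := hL.isNilpotent y hy
  have hxyn := hL.isNilpotent _ (add_mem hx1 hy)
  have hlie {z : A} (hz : z ∈ L 1) {m : ℕ} (i : ℕ) (w : A) (hw : w ∈ L (i + 1) ⊓ L m) :
      ⁅z, w⁆ ∈ L (i + 1 + 1) ⊓ L (m + 1) :=
    ⟨add_comm 1 (i + 1) ▸ hL.lie_mem 1 _ z hz w hw.1, add_comm 1 m ▸ hL.lie_mem 1 m z hz w hw.2⟩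
  let S (m : ℕ) : Submodule K A[X] := coeffsIn fun i => L (i + 1) ⊓ L m
  have hS : S (k + 1) ≤ S k := coeffsIn_mono fun i => inf_le_inf_left _ (hL.antitone k.le_succ)
  have hsub : C x - exp (monomial 1 y) * C x * exp (-monomial 1 y) ∈ S (k + 1) := by
    rw [← neg_sub]
    exact neg_mem (exp_mul_mul_exp_neg_sub_mem (isNilpotent_monomial hyn 1) hS
      (fun w hw => lie_monomial_mem_coeffsIn (hlie hy) hw)
      (C_mem_coeffsIn ⟨hx1, hx⟩))
  have hv := exp_monomial_mul_mul_exp_neg_mem_coeffsIn hxn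
    (fun i w hw => inf_le_inf_left _ (hL.antitone (k + 1).le_succ) (hlie hx1 i w hw)) hsub
  have hmem := (hL.inf (k + 1)).evalOne_mem_closure_exp (d := 0) hv
    (by rw [pow_zero, one_mul, derivative_exp_mul_exp_mul_exp_neg_add hxn hyn hxyn])
    (by rw [map_mul, map_mul, constantCoeff_exp_monomial_succ hxn,
      constantCoeff_exp_monomial_succ hyn, constantCoeff_exp_monomial_succ hxyn.neg, one_mul,
      one_mul])
  rw [map_mul, map_mul, evalOne_exp_monomial hxn, evalOne_exp_monomial hyn,
    evalOne_exp_monomial hxyn.neg] at hmem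
  exact Submonoid.closure_mono (Set.image_mono fun _ h => h.2) hmem

theorem exists_exp_mul_exp_eq (hL : IsNilpotentFiltration L r) (hk : 1 ≤ k) (hx : x ∈ L k)
    (hy : y ∈ L 1) : ∃ z, z ≡ x + y [SMOD L (k + 1)] ∧ exp x * exp y = exp z := by
  obtain ⟨n, hn⟩ : ∃ n, r ≤ n + k := ⟨r, Nat.le_add_right _ _⟩
  induction n generalizing k x y with
  | zero =>
    obtain rfl := hL.eq_zero_of_mem (by lia) hx
    exact ⟨y, by rw [zero_add], by rw [exp_zero, one_mul]⟩
  | succ n ih =>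
    have hxy : x + y ∈ L 1 := add_mem (hL.antitone hk hx) hy
    have habsorb : ∀ g ∈ Submonoid.closure (exp '' (L (k + 1) : Set A)),
        ∃ z, z ≡ x + y [SMOD L (k + 1)] ∧ g * exp (x + y) = exp z := by
      intro g hg
      induction hg using Submonoid.closure_induction_left with
      | one => exact ⟨x + y, SModEq.rfl, one_mul _⟩
      | mul_left _ hw g _ hz =>
        obtain ⟨w, hw, rfl⟩ := hw
        obtain ⟨z, hz, hgz⟩ := hz
        obtain ⟨z', hz', hwz⟩ :=
          ih (by lia) hw (hL.mem_one_of_smodEq (by lia) hz hxy) (by lia)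
        refine ⟨z', ?_, by rw [mul_assoc, hgz, hwz]⟩
        simpa using (hz'.mono (hL.antitone (k + 1).le_succ)).trans ((SModEq.zero.2 hw).add hz)
    obtain ⟨z, hz, hgz⟩ := habsorb _ (hL.exp_mul_exp_mul_exp_neg_add_mem_closure hk hx hy)
    exact ⟨z, hz, by rw [← hgz, mul_assoc, exp_neg_mul_exp_self (hL.isNilpotent _ hxy), mul_one]⟩

theorem exists_exp_add_eq_exp_mul_exp (hL : IsNilpotentFiltration L r) (hk : 1 ≤ k) (hx : x ∈ L k)
    (hy : y ∈ L 1) : ∃ x', x' ≡ x [SMOD L (k + 1)] ∧ exp (x + y) = exp x' * exp y := by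
  obtain ⟨n, hn⟩ : ∃ n, r ≤ n + k := ⟨r, Nat.le_add_right _ _⟩
  induction n generalizing k x y with
  | zero =>
    obtain rfl := hL.eq_zero_of_mem (by lia) hx
    exact ⟨0, SModEq.rfl, by rw [exp_zero, one_mul, zero_add]⟩
  | succ n ih =>
    have hx1 := hL.antitone hk hx
    obtain ⟨z, hz, hxyz⟩ := hL.exists_exp_mul_exp_eq hk hx hy
    have hz1 := hL.mem_one_of_smodEq (by lia) hz (add_mem hx1 hy)
    have hδ : x + y - z ∈ L (k + 1) := SModEq.sub_mem.1 hz.symm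
    obtain ⟨w, hw, hwz⟩ := ih (by lia) hδ hz1 (by lia)
    have hwL : w ∈ L (k + 1) := by
      simpa using add_mem (hL.antitone (k + 1).le_succ (SModEq.sub_mem.1 hw)) hδ
    obtain ⟨x', hx', hwx⟩ := hL.exists_exp_mul_exp_eq (by lia) hwL hx1
    refine ⟨x', ?_, by rw [← hwx, mul_assoc, hxyz, ← hwz, sub_add_cancel]⟩
    simpa using (hx'.mono (hL.antitone (k + 1).le_succ)).trans
      ((SModEq.zero.2 hwL).add SModEq.rfl)

theorem exists_exp_add_mul_exp_eq (hL : IsNilpotentFiltration L r) (hk : 1 ≤ k) {δ : A}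
    (hδ : δ ∈ L k) (hx : x ∈ L 1) (hz : z ∈ L 1) (h : exp x * exp y = exp z) :
    ∃ z', z' ≡ δ + z [SMOD L (k + 1)] ∧ exp (δ + x) * exp y = exp z' := by
  obtain ⟨δ', hδ', hδx⟩ := hL.exists_exp_add_eq_exp_mul_exp hk hδ hx
  have hδ'L : δ' ∈ L k := by
    simpa using add_mem (hL.antitone k.le_succ (SModEq.sub_mem.1 hδ')) hδ
  obtain ⟨z', hz', hδz⟩ := hL.exists_exp_mul_exp_eq hk hδ'L hz
  exact ⟨z', hz'.trans (hδ'.add SModEq.rfl), by rw [hδx, mul_assoc, h, hδz]⟩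

theorem exists_exp_mul_exp_add_eq (hL : IsNilpotentFiltration L r) (hk : 1 ≤ k) {δ : A}
    (hδ : δ ∈ L k) (hx : x ∈ L 1) (hy : y ∈ L 1) (hz : z ∈ L 1) (h : exp x * exp y = exp z) :
    ∃ z', z' ≡ δ + z [SMOD L (k + 1)] ∧ exp x * exp (δ + y) = exp z' := by
  have hneg := exp_neg_eq_of_exp_mul_exp_eq (hL.isNilpotent x hx) (hL.isNilpotent y hy)
    (hL.isNilpotent z hz) h
  obtain ⟨z', hz', hyx⟩ :=
    hL.exists_exp_add_mul_exp_eq hk (neg_mem hδ) (neg_mem hy) (neg_mem hz) hneg.symm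
  have hδ1 := hL.antitone hk hδ
  refine ⟨-z', by simpa [neg_add_rev, add_comm] using hz'.neg, ?_⟩
  have hz'1 := hL.mem_one_of_smodEq (by lia) hz' (add_mem (neg_mem hδ1) (neg_mem hz))
  rw [exp_neg_eq_of_exp_mul_exp_eq (hL.isNilpotent _ (add_mem (neg_mem hδ1) (neg_mem hy)))
    (hL.isNilpotent _ (neg_mem hx)) (hL.isNilpotent _ hz'1) hyx, neg_neg, ← neg_add, neg_neg]

theorem exists_prod_exp_eq (hL : IsNilpotentFiltration L r) {n : ℕ} {u : Fin n → A}
    (hu : ∀ i, u i ∈ L 1) :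
    ∃ s, s ≡ ∑ i, u i [SMOD L 2] ∧ (List.ofFn fun i => exp (u i)).prod = exp s := by
  induction n with
  | zero => exact ⟨0, by simp, by simp⟩
  | succ n ih =>
    obtain ⟨t, ht, hut⟩ := ih fun i => hu i.succ
    have ht1 := hL.mem_one_of_smodEq one_le_two ht (sum_mem fun i _ => hu i.succ)
    obtain ⟨s, hs, hts⟩ := hL.exists_exp_mul_exp_eq le_rfl (hu 0) ht1
    refine ⟨s, ?_, by rw [List.ofFn_succ, List.prod_cons, hut, hts]⟩
    rw [Fin.sum_univ_succ]
    exact hs.trans (SModEq.rfl.add ht)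

theorem exists_prod_exp_add_eq (hL : IsNilpotentFiltration L r) (hk : 1 ≤ k) {n : ℕ}
    {u δ : Fin n → A} (hu : ∀ i, u i ∈ L 1) (hδ : ∀ i, δ i ∈ L k) {s : A} (hs : s ∈ L 1)
    (hus : (List.ofFn fun i => exp (u i)).prod = exp s) :
    ∃ s', s' ≡ ∑ i, δ i + s [SMOD L (k + 1)] ∧
      (List.ofFn fun i => exp (δ i + u i)).prod = exp s' := by
  induction n generalizing s with
  | zero => exact ⟨s, by simp, by simpa using hus⟩
  | succ n ih =>
    obtain ⟨t, ht, hut⟩ := hL.exists_prod_exp_eq fun i => hu i.succ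
    have ht1 := hL.mem_one_of_smodEq one_le_two ht (sum_mem fun i _ => hu i.succ)
    obtain ⟨t', ht', hut'⟩ := ih (fun i => hu i.succ) (fun i => hδ i.succ) ht1 hut
    have hδt : ∑ i : Fin n, δ i.succ ∈ L k := sum_mem fun i _ => hδ i.succ
    have htt : t' - t ∈ L k := by
      simpa [SModEq.sub_mem] using
        (ht'.mono (hL.antitone k.le_succ)).trans ((SModEq.zero.2 hδt).add SModEq.rfl)
    rw [List.ofFn_succ, List.prod_cons, hut] at hus
    obtain ⟨s₁, hs₁, h₁⟩ := hL.exists_exp_mul_exp_add_eq hk htt (hu 0) ht1 hs hus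
    have hs₁1 := hL.mem_one_of_smodEq (by lia) hs₁ (add_mem (hL.antitone hk htt) hs)
    obtain ⟨s₂, hs₂, h₂⟩ := hL.exists_exp_add_mul_exp_eq hk (hδ 0) (hu 0) hs₁1 h₁
    refine ⟨s₂, ?_, by rw [List.ofFn_succ, List.prod_cons, hut', ← h₂, sub_add_cancel]⟩
    rw [Fin.sum_univ_succ, add_assoc]
    refine hs₂.trans (SModEq.rfl.add (hs₁.trans (SModEq.add ?_ SModEq.rfl)))
    simpa using ht'.sub (SModEq.refl t)

theorem exists_exp_sum_eq_prod_exp (hL : IsNilpotentFiltration L r) {n : ℕ}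
    {E : Fin n → Submodule K A} (hE : ∀ k, 2 ≤ k → L k ≤ ⨆ i, E i ⊓ L k) {x : Fin n → A}
    (hx : ∀ i, x i ∈ L 1) :
    ∃ u : Fin n → A, (∀ i, u i - x i ∈ E i ⊓ L 2) ∧
      exp (∑ i, x i) = (List.ofFn fun i => exp (u i)).prod := by
  have happrox (m : ℕ) : ∃ u : Fin n → A, (∀ i, u i - x i ∈ E i ⊓ L 2) ∧
      ∃ s, s ≡ ∑ i, x i [SMOD L (m + 2)] ∧ (List.ofFn fun i => exp (u i)).prod = exp s := by
    induction m with
    | zero => exact ⟨x, fun i => by simp, hL.exists_prod_exp_eq hx⟩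
    | succ m ih =>
      obtain ⟨u, hux, s, hs, hus⟩ := ih
      have hu (i) : u i ∈ L 1 := by
        simpa using add_mem (hL.antitone one_le_two (hux i).2) (hx i)
      have hs1 := hL.mem_one_of_smodEq (by lia) hs (sum_mem fun i _ => hx i)
      obtain ⟨δ, hδ, hδs⟩ := (Submodule.mem_iSup_iff_exists_finsupp _ _).1
        (hE _ (Nat.le_add_left 2 m) (SModEq.sub_mem.1 hs.symm))
      rw [Finsupp.sum_fintype _ _ fun _ => rfl] at hδs
      obtain ⟨s', hs', hus'⟩ :=
        hL.exists_prod_exp_add_eq (by lia) hu (fun i => (hδ i).2) hs1 hus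
      refine ⟨fun i => δ i + u i, fun i => ?_, s', ?_, hus'⟩
      · rw [add_sub_assoc]
        exact add_mem ⟨(hδ i).1, hL.antitone (Nat.le_add_left 2 m) (hδ i).2⟩ (hux i)
      · rwa [hδs, sub_add_cancel] at hs'
  obtain ⟨u, hux, s, hs, hus⟩ := happrox r
  refine ⟨u, hux, ?_⟩
  rw [hus, sub_eq_zero.1 (hL.eq_zero_of_mem (Nat.le_add_right r 2) (SModEq.sub_mem.1 hs))]

end IsNilpotentFiltration

theorem eq_of_add_add_eq_add_add {K M : Type*} [Ring K] [AddCommGroup M] [Module K M]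
    {a b c : Submodule K M} (ha : Disjoint a (b ⊔ c)) (hbc : Disjoint b c) {x x' y y' z z' : M}
    (hx : x ∈ a) (hx' : x' ∈ a) (hy : y ∈ b) (hy' : y' ∈ b) (hz : z ∈ c) (hz' : z' ∈ c)
    (h : x + y + z = x' + y' + z') : x = x' ∧ y = y' ∧ z = z' := by
  have hsum : x - x' + (y - y' + (z - z')) = 0 := by
    rw [← sub_eq_zero.2 h]
    abel
  obtain ⟨hxx, hyz⟩ := Submodule.disjoint_iff_add_eq_zero.1 ha (sub_mem hx hx')
    (Submodule.add_mem_sup (sub_mem hy hy') (sub_mem hz hz')) hsum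
  obtain ⟨hyy, hzz⟩ :=
    Submodule.disjoint_iff_add_eq_zero.1 hbc (sub_mem hy hy') (sub_mem hz hz') hyz
  exact ⟨sub_eq_zero.1 hxx, sub_eq_zero.1 hyy, sub_eq_zero.1 hzz⟩

theorem cbh_three_factor_general {K A : Type*} [Ring K] [Module ℚ K] [Ring A] [Module K A]
    [Algebra ℚ A] {L : ℕ → Submodule K A} {r : ℕ} (hL : IsNilpotentFiltration L r)
    {a b c : Submodule K A}
    (hcompat : ∀ k, 1 ≤ k → L k ≤ (a ⊓ L k) ⊔ (b ⊓ L k) ⊔ (c ⊓ L k))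
    (hd1 : Disjoint a (b ⊔ c)) (hd2 : Disjoint b c) {α : A} (hα : α ∈ L 1) :
    ∃ γ ∈ a ⊓ L 1, ∃ lam ∈ b ⊓ L 1, ∃ φ ∈ c ⊓ L 1, exp α = exp γ * exp lam * exp φ ∧
      ∀ αa αb αc : A, αa ∈ a → αb ∈ b → αc ∈ c → α = αa + αb + αc →
        γ - αa ∈ L 2 ∧ lam - αb ∈ L 2 ∧ φ - αc ∈ L 2 := by
  obtain ⟨_, hxy, z, hz, rfl⟩ := Submodule.mem_sup.1 (hcompat 1 le_rfl hα)
  obtain ⟨x, hx, y, hy, rfl⟩ := Submodule.mem_sup.1 hxy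
  obtain ⟨u, hu, hprod⟩ := hL.exists_exp_sum_eq_prod_exp (E := ![a, b, c]) (x := ![x, y, z])
    (fun k hk => (hcompat k (by lia)).trans (sup_le (sup_le
      (le_iSup (fun i => ![a, b, c] i ⊓ L k) 0) (le_iSup (fun i => ![a, b, c] i ⊓ L k) 1))
      (le_iSup (fun i => ![a, b, c] i ⊓ L k) 2)))
    (by simpa [Fin.forall_fin_succ] using ⟨hx.2, hy.2, hz.2⟩)
  have hmem {E : Submodule K A} {v w : A} (hv : v - w ∈ E ⊓ L 2) (hw : w ∈ E ⊓ L 1) :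
      v ∈ E ⊓ L 1 := by
    simpa using add_mem (inf_le_inf_left E (hL.antitone one_le_two) hv) hw
  refine ⟨u 0, hmem (hu 0) hx, u 1, hmem (hu 1) hy, u 2, hmem (hu 2) hz, ?_, ?_⟩
  · simpa [Fin.sum_univ_succ, add_assoc, mul_assoc] using hprod
  · intro x' y' z' hx' hy' hz' h
    obtain ⟨rfl, rfl, rfl⟩ := eq_of_add_add_eq_add_add hd1 hd2 hx.1 hx' hy.1 hy' hz.1 hz' h
    exact ⟨(hu 0).2, (hu 1).2, (hu 2).2⟩

theorem expNil_eq_exp {V : Type*} [AddCommGroup V] [Module ℂ V] [FiniteDimensional ℂ V]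
    [Algebra ℚ (Module.End ℂ V)] {f : Module.End ℂ V} (hf : IsNilpotent f) : expNil f = exp f := by
  have hpow : f ^ Module.finrank ℂ V = 0 := by
    simpa [hf.charpoly_eq_X_pow_finrank] using f.aeval_self_charpoly
  rw [exp_eq_sum (pow_eq_zero_of_le (Nat.le_succ _) hpow), expNil]
  exact Finset.sum_congr rfl fun i _ => inv_natCast_smul_eq ℂ ℚ _ _

/-- CBH three-factor decomposition in a nilpotent Lie algebra `g = Lie_{-1}` of nilpotent
endomorphisms, with a chain of ideals `Lie_{-1} ⊇ Lie_{-2} ⊇ ⋯ ⊇ Lie_{-r} = 0`,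
`[Lie_{-p}, Lie_{-q}] ⊆ Lie_{-p-q}`, and a vector space decomposition `g = a ⊕ b ⊕ c`
into Lie subalgebras compatible with the filtration: every `exp(α)`, `α ∈ g`, factors as
`exp(γ)exp(λ)exp(φ)` with `γ ∈ a`, `λ ∈ b`, `φ ∈ c`, and `γ ≡ π_a(α)`, `λ ≡ π_b(α)`,
`φ ≡ π_c(α)` modulo `Lie_{-2}`. -/
theorem cbh_three_factor {V : Type*} [AddCommGroup V] [Module ℂ V] [FiniteDimensional ℂ V]
    (L : ℕ → Submodule ℂ (Module.End ℂ V)) (r : ℕ)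
    (hnil : ∀ x ∈ L 1, IsNilpotent x)
    (hanti : ∀ p q : ℕ, p ≤ q → L q ≤ L p)
    (hr : L r = ⊥)
    (hbr : ∀ p q : ℕ, ∀ x ∈ L p, ∀ y ∈ L q, ⁅x, y⁆ ∈ L (p + q))
    (a b c : Submodule ℂ (Module.End ℂ V))
    (hsub_a : ∀ x ∈ a, ∀ y ∈ a, ⁅x, y⁆ ∈ a)
    (hsub_b : ∀ x ∈ b, ∀ y ∈ b, ⁅x, y⁆ ∈ b)
    (hsub_c : ∀ x ∈ c, ∀ y ∈ c, ⁅x, y⁆ ∈ c)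
    (hcompat : ∀ k : ℕ, 1 ≤ k → (a ⊓ L k) ⊔ (b ⊓ L k) ⊔ (c ⊓ L k) = L k)
    (hd1 : Disjoint a (b ⊔ c)) (hd2 : Disjoint b c) :
    ∀ α ∈ L 1, ∃ γ ∈ a, ∃ lam ∈ b, ∃ φ ∈ c,
      expNil α = expNil γ * expNil lam * expNil φ ∧
      ∀ αa αb αc : Module.End ℂ V, αa ∈ a → αb ∈ b → αc ∈ c → α = αa + αb + αc →
        γ - αa ∈ L 2 ∧ lam - αb ∈ L 2 ∧ φ - αc ∈ L 2 := by
  intro α hα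
  let _ : Algebra ℚ (Module.End ℂ V) := Algebra.compHom _ (algebraMap ℚ ℂ)
  obtain ⟨γ, hγ, lam, hlam, φ, hφ, hexp, hmod⟩ := cbh_three_factor_general
    ⟨hnil, fun p q => hanti p q, hr, hbr⟩ (fun k hk => (hcompat k hk).ge) hd1 hd2 hα
  refine ⟨γ, hγ.1, lam, hlam.1, φ, hφ.1, ?_, hmod⟩
  rw [expNil_eq_exp (hnil α hα), expNil_eq_exp (hnil γ hγ.2), expNil_eq_exp (hnil lam hlam.2),
    expNil_eq_exp (hnil φ hφ.2), hexp]
end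

section
/- Let N₀ and N' be nilpotent endomorphisms of a finite-dimensional vector space generating a nilpotent Lie subalgebra, and let y be a scalar. Then exp(iy(N₀ + N')) exp(−iyN₀) = exp(Q) where Q = ((e^{ad(iyN₀)} − 1)/ad(iyN₀))(iyN') + R, with R lying in the Lie ideal generated by all brackets containing N' at least twice. In particular, modulo terms of degree ≥ 2 in N', Q = Σ_{m≥0} (1/(m+1)!) (ad(iyN₀))^m (iyN'). -/
/-- The adjoint action `ad A = [A, ·]` on `End(V)`. -/
noncomputable def adE {V : Type*} [AddCommGroup V] [Module ℂ V] (A : Module.End ℂ V) :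
    Module.End ℂ (Module.End ℂ V) :=
  LinearMap.mulLeft ℂ A - LinearMap.mulRight ℂ A

/-- `LieMon N₀ N' x m l`: `x` is an iterated Lie-bracket monomial in `N₀`, `N'`
containing `N'` exactly `m` times and of total length `l`. -/
inductive LieMon {V : Type*} [AddCommGroup V] [Module ℂ V] (N₀ N' : Module.End ℂ V) :
    Module.End ℂ V → ℕ → ℕ → Prop
  | base0 : LieMon N₀ N' N₀ 0 1
  | base1 : LieMon N₀ N' N' 1 1
  | bracket {x y : Module.End ℂ V} {m n l k : ℕ} :
      LieMon N₀ N' x m l → LieMon N₀ N' y n k → LieMon N₀ N' ⁅x, y⁆ (m + n) (l + k)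

/-!
Put a parameter `X` in front of `N'`: let `P = a + X b` in `A[X]`, with `a`, `b` the multiples of
`N₀`, `N'` in the theorem. For the Euler derivation `D = X d/dX`, the logarithmic derivative of
`exp P` is `D (exp P) exp (-P) = φ(ad P) (D P)`, where `φ(z) = (eᶻ - 1) / z`. Among the polynomials
without constant term whose coefficient of `Xᵏ` has degree `k` in `N'`, the equation
`φ(ad Q) (D Q) = φ(ad P) (D P)` is solved by successive approximation, since its linear part `D` is
invertible there. As `exp P` and `exp Q` then have the same logarithmic derivative, `exp (-Q) exp P`
is constant, equal to its value `exp a` at `X = 0`, and `X = 1` gives the factorisation. Comparing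
coefficients of `X` in the equation shows that the term of degree one of `Q` is `φ(ad a) b`; the
other terms have degree at least two in `N'`.
-/

attribute [local instance] LieRing.ofAssociativeRing

section AssociativeAlgebra

open LinearMap (mulLeft mulRight commute_mulLeft_right)

variable {R A : Type*} [CommRing R] [Ring A] [Algebra R A]

lemma lie_mem_pow_add {W : Submodule R A} {x y : A} {m n : ℕ} (hx : x ∈ W ^ m) (hy : y ∈ W ^ n) :
    ⁅x, y⁆ ∈ W ^ (m + n) :=
  sub_mem (pow_add W m n ▸ Submodule.mul_mem_mul hx hy)
    (add_comm n m ▸ pow_add W n m ▸ Submodule.mul_mem_mul hy hx)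

lemma ad_eq_mulLeft_add_mulRight_neg (a : A) :
    LieAlgebra.ad R A a = mulLeft R a + mulRight R (-a) := by
  ext; simp [Ring.lie_def, sub_eq_add_neg]

lemma ad_pow_eq_zero {a : A} {k n : ℕ} (ha : a ^ k = 0) (hn : 2 * k ≤ n + 1) :
    LieAlgebra.ad R A a ^ n = 0 := by
  rw [ad_eq_mulLeft_add_mulRight_neg]
  refine (commute_mulLeft_right a (-a)).add_pow_eq_zero_of_add_le_succ_of_pow_eq_zero
    (m := k) (n := k) ?_ ?_ (by omega)
  · simp [LinearMap.pow_mulLeft, ha]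
  · simp [LinearMap.pow_mulRight, neg_pow a, ha]

lemma isNilpotent_of_mem {U : Submodule R A} (hU : IsNilpotent U) {x : A} (hx : x ∈ U) :
    IsNilpotent x := by
  obtain ⟨n, hn⟩ := hU
  exact ⟨n, by simpa [hn] using Submodule.pow_mem_pow U hx n⟩

lemma isNilpotent_of_le {U W : Submodule R A} (hW : IsNilpotent W) (h : U ≤ W) :
    IsNilpotent U := by
  obtain ⟨n, hn⟩ := hW
  exact ⟨n, eq_bot_mono (pow_le_pow_left' h n) hn⟩

end AssociativeAlgebra

section ExpSubOneDiv

open Finset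
open IsNilpotent (exp exp_eq_sum)

/-- `(eᵃ - 1) / a = ∑ aⁱ / (i + 1)!`, the companion of `IsNilpotent.exp`. Like the exponential, it
is meaningful only for nilpotent `a`. -/
noncomputable def expSubOneDiv {A : Type*} [Ring A] [Module ℚ A] (a : A) : A :=
  ∑ i ∈ range (nilpotencyClass a), ((i + 1).factorial : ℚ)⁻¹ • a ^ i

lemma expSubOneDiv_eq_sum {A : Type*} [Ring A] [Module ℚ A] {a : A} {k : ℕ} (h : a ^ k = 0) :
    expSubOneDiv a = ∑ i ∈ range k, ((i + 1).factorial : ℚ)⁻¹ • a ^ i := by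
  refine sum_subset (range_subset_range.2 (csInf_le' h)) fun i _ hi ↦ ?_
  rw [pow_eq_zero_of_le (not_lt.1 (mem_range.not.1 hi)) (pow_nilpotencyClass ⟨k, h⟩), smul_zero]

lemma exp_eq_one_add_expSubOneDiv_mul {A : Type*} [Ring A] [Algebra ℚ A] {a : A}
    (h : IsNilpotent a) : exp a = 1 + expSubOneDiv a * a := by
  obtain ⟨k, hk⟩ := h
  rw [exp_eq_sum (pow_eq_zero_of_le k.le_succ hk), expSubOneDiv_eq_sum hk, sum_range_succ',
    sum_mul, add_comm]
  simp [pow_succ]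

variable {R M N : Type*} [CommRing R] [AddCommGroup M] [Module R M] [Module ℚ M]
  [AddCommGroup N] [Module R N] [Module ℚ N]

lemma map_expSubOneDiv_apply {S : Module.End R M} {T : Module.End R N} {f : M →ₗ[R] N}
    (hS : IsNilpotent S) (hT : IsNilpotent T) (h : T ∘ₗ f = f ∘ₗ S) (x : M) :
    f (expSubOneDiv S x) = expSubOneDiv T (f x) := by
  obtain ⟨k, hS⟩ := hS
  obtain ⟨l, hT⟩ := hT
  have hpow (i : ℕ) : (T ^ i) (f x) = f ((S ^ i) x) :=
    LinearMap.congr_fun (Module.End.commute_pow_left_of_commute h i) x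
  simp [expSubOneDiv_eq_sum (pow_eq_zero_of_le (le_max_left k l) hS),
    expSubOneDiv_eq_sum (pow_eq_zero_of_le (le_max_right k l) hT), hpow, map_rat_smul]

end ExpSubOneDiv

section LogarithmicDerivative

open IsNilpotent (exp)
open LinearMap (mulLeft mulRight)

variable {R A : Type*} [CommRing R] [Ring A] [Algebra R A]

lemma ad_mulLeft_eq_neg_mulLeft {D : Module.End R A}
    (hD : ∀ x y, D (x * y) = D x * y + x * D y) (z : A) :
    LieAlgebra.ad R (Module.End R A) (mulLeft R z) D = -mulLeft R (D z) := by
  ext; simp [Ring.lie_def, hD]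

variable [Algebra ℚ A]

lemma exp_mulLeft_apply {a : A} (ha : IsNilpotent a) (x : A) :
    exp (mulLeft R a) x = exp a * x :=
  LinearMap.congr_fun (IsNilpotent.map_exp ha (Algebra.lmul R A)).symm x

lemma exp_mulRight_apply {a : A} (ha : IsNilpotent a) (x : A) :
    exp (mulRight R a) x = x * exp a := by
  obtain ⟨k, hk⟩ := ha
  have hk' : mulRight R a ^ k = 0 := by simp [LinearMap.pow_mulRight, hk]
  simp [IsNilpotent.exp_eq_sum hk, IsNilpotent.exp_eq_sum hk', LinearMap.pow_mulRight,
    Finset.mul_sum]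

variable (R) in
lemma exp_mul_mul_exp_neg {a : A} (ha : IsNilpotent a) (x : A) :
    exp a * x * exp (-a) = exp (LieAlgebra.ad R A a) x := by
  have hn := ha.neg
  rw [ad_eq_mulLeft_add_mulRight_neg,
    IsNilpotent.exp_add_of_commute (LinearMap.commute_mulLeft_right a (-a))
    ((LinearMap.isNilpotent_mulLeft_iff R a).2 ha) ((LinearMap.isNilpotent_mulRight_iff R _).2 hn),
    Module.End.mul_apply, exp_mulRight_apply hn, exp_mulLeft_apply ha, mul_assoc]

variable [Algebra ℚ R]

lemma exp_mul_derivation_exp_neg_mul {D : Module.End R A}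
    (hD : ∀ x y, D (x * y) = D x * y + x * D y) {z : A} (hz : IsNilpotent z) (x : A) :
    exp z * D (exp (-z) * x) = D x - expSubOneDiv (LieAlgebra.ad R A z) (D z) * x := by
  have hL : IsNilpotent (mulLeft R z : Module.End R A) :=
    (LinearMap.isNilpotent_mulLeft_iff R z).2 hz
  have had := LieAlgebra.ad_nilpotent_of_nilpotent (R := R) (A := Module.End R A) hL
  have hmap : mulLeft R (expSubOneDiv (LieAlgebra.ad R A z) (D z)) =
      expSubOneDiv (LieAlgebra.ad R (Module.End R A) (mulLeft R z)) (mulLeft R (D z)) :=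
    map_expSubOneDiv_apply (f := (Algebra.lmul R A).toLinearMap)
      (LieAlgebra.ad_nilpotent_of_nilpotent hz) had
      (by ext; simp [Ring.lie_def, mul_assoc]) (D z)
  have hexp : exp (LieAlgebra.ad R (Module.End R A) (mulLeft R z)) D =
      D - mulLeft R (expSubOneDiv (LieAlgebra.ad R A z) (D z)) := by
    rw [exp_eq_one_add_expSubOneDiv_mul had, LinearMap.add_apply, Module.End.one_apply,
      Module.End.mul_apply, ad_mulLeft_eq_neg_mulLeft hD, map_neg, ← hmap, sub_eq_add_neg]
  have hneg : -mulLeft R z = mulLeft R (-z) := by ext; simp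
  have hconj := LinearMap.congr_fun (exp_mul_mul_exp_neg R hL D) x
  rw [hexp, hneg] at hconj
  simpa [exp_mulLeft_apply hz, exp_mulLeft_apply hz.neg] using hconj

lemma derivation_exp_neg_mul_exp_eq_zero {D : Module.End R A}
    (hD : ∀ x y, D (x * y) = D x * y + x * D y) {P Q : A} (hP : IsNilpotent P)
    (hQ : IsNilpotent Q)
    (h : expSubOneDiv (LieAlgebra.ad R A P) (D P) = expSubOneDiv (LieAlgebra.ad R A Q) (D Q)) :
    D (exp (-Q) * exp P) = 0 := by
  have hone : D 1 = 0 := by simpa using hD 1 1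
  have hexp : D (exp P) = expSubOneDiv (LieAlgebra.ad R A P) (D P) * exp P := by
    have := exp_mul_derivation_exp_neg_mul hD hP (exp P)
    rwa [IsNilpotent.exp_neg_mul_exp_self hP, hone, mul_zero, eq_comm, sub_eq_zero] at this
  rw [← (IsNilpotent.isUnit_exp hQ).mul_right_eq_zero, exp_mul_derivation_exp_neg_mul hD hQ, hexp,
    h, sub_self]

end LogarithmicDerivative

section FilteredLieAlgebra

variable {R L : Type*} [CommRing R] [LieRing L] [LieAlgebra R L]

lemma lie_mem_of_mem_span {s t : Set L} {P : Submodule R L}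
    (h : ∀ x ∈ s, ∀ y ∈ t, ⁅x, y⁆ ∈ P) {x y : L}
    (hx : x ∈ Submodule.span R s) (hy : y ∈ Submodule.span R t) : ⁅x, y⁆ ∈ P :=
  LinearMap.BilinMap.apply_apply_mem_of_mem_span P s t (LieAlgebra.ad R L : L →ₗ[R] Module.End R L)
    h x y hx hy

variable {F : ℕ → Submodule R L} [SetLike.GradedBracket F]

lemma isNilpotent_of_toSubmodule_le {H : LieSubalgebra R L} (hH : H.toSubmodule ≤ F 1) {N : ℕ}
    (hN : F (N + 1) = ⊥) : LieRing.IsNilpotent H := by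
  have hlcs (n : ℕ) : (LieModule.lowerCentralSeries R H H n).toSubmodule ≤
      (F (n + 1)).comap H.toSubmodule.subtype := by
    induction n with
    | zero => exact fun z _ ↦ hH z.2
    | succ n ih =>
      rw [LieModule.lowerCentralSeries_succ, LieSubmodule.lieIdeal_oper_eq_linear_span',
        Submodule.span_le]
      rintro _ ⟨x, -, z, hz, rfl⟩
      exact add_comm 1 (n + 1) ▸ SetLike.GradedBracket.bracket_mem (hH x.2) (ih hz)
  refine (LieModule.isNilpotent_iff R H H).2 ⟨N, (LieSubmodule.eq_bot_iff _).2 fun z hz ↦ ?_⟩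
  have : (z : L) ∈ F (N + 1) := hlcs N hz
  rwa [hN, Submodule.mem_bot, ZeroMemClass.coe_eq_zero] at this

lemma isNilpotent_lieSpan_of_subset (hF : Antitone F) {S : Set L} (hS : S ⊆ F 1) {N : ℕ}
    (hN : F N = ⊥) : LieRing.IsNilpotent (LieSubalgebra.lieSpan R L S) := by
  refine isNilpotent_of_toSubmodule_le (F := F) (fun x hx ↦ ?_)
    (eq_bot_mono (hF N.le_succ) hN)
  replace hx : x ∈ LieSubalgebra.lieSpan R L S := hx
  induction hx using LieSubalgebra.lieSpan_induction with
  | mem x hx => exact hS hx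
  | zero => exact zero_mem _
  | add x y _ _ hx hy => exact add_mem hx hy
  | smul r x _ hx => exact Submodule.smul_mem _ r hx
  | lie x y _ _ hx hy => exact hF one_le_two (SetLike.GradedBracket.bracket_mem hx hy)

lemma ad_pow_mem (hF : Antitone F) {q w : L} {j k : ℕ} (hq : q ∈ F j) (hw : w ∈ F k) (m : ℕ) :
    (LieAlgebra.ad R L q ^ m) w ∈ F k := by
  induction m with
  | zero => exact hw
  | succ m ih =>
    rw [pow_succ', Module.End.mul_apply]
    exact hF (Nat.le_add_left k j) (SetLike.GradedBracket.bracket_mem hq ih)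

lemma ad_add_pow_succ_sub_mem (hF : Antitone F) {q t w u : L} {k : ℕ} (hq : q ∈ F 1)
    (hw : w ∈ F 1) (ht : t ∈ F (k + 1)) (hu : u ∈ F (k + 1)) (m : ℕ) :
    (LieAlgebra.ad R L (q + t) ^ (m + 1)) (w + u) - (LieAlgebra.ad R L q ^ (m + 1)) w
      ∈ F (k + 2) := by
  have hqt : q + t ∈ F 1 := add_mem hq (hF (Nat.le_add_left 1 k) ht)
  have hsplit (x y : L) : ⁅q + t, x⁆ - ⁅q, y⁆ = ⁅q + t, x - y⁆ + ⁅t, y⁆ := by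
    simp only [lie_sub, add_lie]; abel
  have hstep (x y : L) (hxy : x - y ∈ F (k + 1)) (hy : y ∈ F 1) :
      ⁅q + t, x⁆ - ⁅q, y⁆ ∈ F (k + 2) := by
    rw [hsplit, show k + 2 = 1 + (k + 1) by omega]
    exact add_mem (SetLike.GradedBracket.bracket_mem hqt hxy)
      (add_comm (k + 1) 1 ▸ SetLike.GradedBracket.bracket_mem ht hy)
  induction m with
  | zero =>
    simpa only [zero_add, pow_one, LieAlgebra.ad_apply] using
      hstep (w + u) w (by simpa using hu) hw
  | succ m ih =>
    rw [pow_succ', pow_succ' _ (m + 1)]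
    exact hstep _ _ (hF (Nat.le_succ _) ih) (ad_pow_mem hF hq hw _)

variable [Algebra ℚ R] [Module ℚ L]

lemma expSubOneDiv_ad_mem (hF : Antitone F) {q w : L} {j k : ℕ} (hq : q ∈ F j) (hw : w ∈ F k) :
    expSubOneDiv (LieAlgebra.ad R L q) w ∈ F k := by
  rw [expSubOneDiv, LinearMap.sum_apply]
  exact sum_mem fun m _ ↦ Submodule.smul_of_tower_mem _ _ (ad_pow_mem hF hq hw m)

lemma expSubOneDiv_ad_add_sub_mem (hF : Antitone F)
    (had : ∀ q ∈ F 1, IsNilpotent (LieAlgebra.ad R L q)) {q t w u : L} {k : ℕ} (hq : q ∈ F 1)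
    (hw : w ∈ F 1) (ht : t ∈ F (k + 1)) (hu : u ∈ F (k + 1)) :
    expSubOneDiv (LieAlgebra.ad R L (q + t)) (w + u) - expSubOneDiv (LieAlgebra.ad R L q) w - u
      ∈ F (k + 2) := by
  obtain ⟨a, ha⟩ := had q hq
  obtain ⟨b, hb⟩ := had (q + t) (add_mem hq (hF (Nat.le_add_left 1 k) ht))
  rw [expSubOneDiv_eq_sum (pow_eq_zero_of_le (le_max_left a b |>.trans (Nat.le_succ _)) ha),
    expSubOneDiv_eq_sum (pow_eq_zero_of_le (le_max_right a b |>.trans (Nat.le_succ _)) hb),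
    Finset.sum_range_succ', Finset.sum_range_succ']
  have hsum : ∑ m ∈ Finset.range (max a b), ((m + 1 + 1).factorial : ℚ)⁻¹ •
      ((LieAlgebra.ad R L (q + t) ^ (m + 1)) (w + u) - (LieAlgebra.ad R L q ^ (m + 1)) w)
      ∈ F (k + 2) :=
    sum_mem fun m _ ↦ Submodule.smul_of_tower_mem _ _ (ad_add_pow_succ_sub_mem hF hq hw ht hu m)
  convert hsum using 1
  simp only [zero_add, Nat.factorial_one, Nat.cast_one, inv_one, pow_zero, one_smul,
    LinearMap.add_apply, LinearMap.sum_apply, LinearMap.smul_apply, Module.End.one_apply,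
    smul_sub, Finset.sum_sub_distrib]
  abel

/-- Successive approximation: an error in `F (n + 1)` is removed up to `F (n + 2)` by adding to `q`
a solution `t ∈ F (n + 1)` of the linearised equation `D t = error`. -/
lemma exists_expSubOneDiv_ad_apply_eq (hF : Antitone F)
    (had : ∀ q ∈ F 1, IsNilpotent (LieAlgebra.ad R L q)) {D : Module.End R L}
    (hD : ∀ n, (F (n + 1)).map D = F (n + 1)) {N : ℕ} (hN : F N = ⊥) {w : L} (hw : w ∈ F 1) :
    ∃ q ∈ F 1, expSubOneDiv (LieAlgebra.ad R L q) (D q) = w := by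
  have happrox (n : ℕ) :
      ∃ q ∈ F 1, expSubOneDiv (LieAlgebra.ad R L q) (D q) - w ∈ F (n + 1) := by
    induction n with
    | zero => exact ⟨0, zero_mem _, by simpa using hw⟩
    | succ n ih =>
      obtain ⟨q, hq, herr⟩ := ih
      rw [← neg_mem_iff, neg_sub, ← hD] at herr
      obtain ⟨t, ht, hDt⟩ := herr
      refine ⟨q + t, add_mem hq (hF (Nat.le_add_left 1 n) ht), ?_⟩
      have hDq : D q ∈ F 1 := hD 0 ▸ Submodule.mem_map_of_mem hq
      have hDt' : D t ∈ F (n + 1) := hD n ▸ Submodule.mem_map_of_mem ht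
      have hnext := expSubOneDiv_ad_add_sub_mem hF had hq hDq ht hDt'
      rwa [← map_add, hDt, sub_sub, add_sub_cancel] at hnext
  obtain ⟨q, hq, herr⟩ := happrox N
  have hbot := hF (Nat.le_succ N) herr
  rw [hN, Submodule.mem_bot, sub_eq_zero] at hbot
  exact ⟨q, hq, hbot⟩

end FilteredLieAlgebra

section GradedPolynomial

open Polynomial Finset

variable {R A : Type*} [CommRing R] [Ring A] [Algebra R A]

variable (R A) in
/-- The Euler derivation `X * d/dX` of `A[X]`. It replaces `d/dX` because it preserves the degree of
monomials, hence `gradedFiltration`. -/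
noncomputable def eulerDerivation : Module.End R A[X] :=
  LinearMap.mulLeft R X ∘ₗ derivative.restrictScalars R

lemma eulerDerivation_apply (P : A[X]) : eulerDerivation R A P = X * derivative P := rfl

lemma coeff_eulerDerivation (P : A[X]) (k : ℕ) :
    (eulerDerivation R A P).coeff k = k • P.coeff k := by
  cases k with
  | zero => simp [eulerDerivation_apply]
  | succ k =>
    rw [eulerDerivation_apply, coeff_X_mul, coeff_derivative, nsmul_eq_mul']
    norm_cast

lemma eulerDerivation_mul (P Q : A[X]) :
    eulerDerivation R A (P * Q) =
      eulerDerivation R A P * Q + P * eulerDerivation R A Q := by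
  rw [eulerDerivation_apply, derivative_mul, mul_add, ← mul_assoc, ← mul_assoc, X_mul (p := P),
    mul_assoc P]
  rfl

lemma eq_C_of_eulerDerivation_eq_zero [Algebra ℚ A] {P : A[X]}
    (hP : eulerDerivation R A P = 0) : P = C (P.coeff 0) := by
  have := IsAddTorsionFree.of_module_rat A
  ext k
  cases k with
  | zero => simp
  | succ k =>
    have hk : (k + 1) • P.coeff (k + 1) = 0 := by
      rw [← coeff_eulerDerivation (R := R), hP, coeff_zero]
    rw [coeff_C_succ, ← nsmul_right_inj k.succ_ne_zero, hk, smul_zero]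

/-- The polynomials `∑ aₖ Xᵏ` with `aₖ ∈ G k` that are divisible by `Xⁿ`: the filtration along which
the logarithm of `exp (a + b) * exp (-a)` is approximated. -/
def gradedFiltration (G : ℕ → Submodule R A) (n : ℕ) : Submodule R A[X] where
  carrier := {P | ∀ k, P.coeff k ∈ G k ∧ (k < n → P.coeff k = 0)}
  add_mem' hP hQ k := ⟨by simpa using add_mem (hP k).1 (hQ k).1,
    fun hk ↦ by simp [(hP k).2 hk, (hQ k).2 hk]⟩
  zero_mem' k := by simp
  smul_mem' r P hP k := ⟨by simpa using (G k).smul_mem r (hP k).1,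
    fun hk ↦ by simp [(hP k).2 hk]⟩

variable {G : ℕ → Submodule R A}

lemma gradedFiltration_antitone : Antitone (gradedFiltration G) :=
  fun _ _ hmn _ hP k ↦ ⟨(hP k).1, fun hk ↦ (hP k).2 (hk.trans_le hmn)⟩

lemma gradedFiltration_eq_bot {N : ℕ} (hG : ∀ k, N ≤ k → G k = ⊥) :
    gradedFiltration G N = ⊥ := by
  refine (Submodule.eq_bot_iff _).2 fun P hP ↦ Polynomial.ext fun k ↦ ?_
  obtain hk | hk := lt_or_ge k N
  · exact (hP k).2 hk
  · simpa [hG k hk] using (hP k).1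

lemma monomial_mem_gradedFiltration {k n : ℕ} (hn : n ≤ k) {x : A} (hx : x ∈ G k) :
    monomial k x ∈ gradedFiltration G n := fun i ↦ by
  rw [coeff_monomial]
  split_ifs with h
  · exact h ▸ ⟨hx, fun hk ↦ absurd hk hn.not_gt⟩
  · exact ⟨zero_mem _, fun _ ↦ rfl⟩

lemma coeff_lie (P Q : A[X]) (k : ℕ) :
    ⁅P, Q⁆.coeff k = ∑ p ∈ antidiagonal k, ⁅P.coeff p.1, Q.coeff p.2⁆ := by
  simp only [Ring.lie_def, coeff_sub, coeff_mul, sum_sub_distrib]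
  rw [← Finset.Nat.sum_antidiagonal_swap (f := fun p ↦ Q.coeff p.1 * P.coeff p.2)]
  rfl

instance [SetLike.GradedBracket G] : SetLike.GradedBracket (gradedFiltration G) where
  bracket_mem m n P Q hP hQ k := by
    rw [coeff_lie]
    refine ⟨sum_mem fun p hp ↦ ?_, fun hk ↦ sum_eq_zero fun p hp ↦ ?_⟩
    · rw [← mem_antidiagonal.1 hp]
      exact SetLike.GradedBracket.bracket_mem (hP p.1).1 (hQ p.2).1
    · rw [← mem_antidiagonal.1 hp] at hk
      obtain h | h : p.1 < m ∨ p.2 < n := by omega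
      · rw [(hP p.1).2 h, zero_lie]
      · rw [(hQ p.2).2 h, lie_zero]

lemma map_eulerDerivation_gradedFiltration [Algebra ℚ R] [Algebra ℚ A] (n : ℕ) :
    (gradedFiltration G (n + 1)).map (eulerDerivation R A) = gradedFiltration G (n + 1) := by
  refine le_antisymm (Submodule.map_le_iff_le_comap.2 fun P hP k ↦ ?_) fun P hP ↦ ?_
  · rw [coeff_eulerDerivation]
    exact ⟨nsmul_mem (hP k).1 k, fun hk ↦ by rw [(hP k).2 hk, smul_zero]⟩
  let Q : A[X] := ∑ k ∈ P.support, monomial k ((k : ℚ)⁻¹ • P.coeff k)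
  have hcoeff (k : ℕ) : Q.coeff k = (k : ℚ)⁻¹ • P.coeff k := by
    simp +contextual [Q, coeff_monomial]
  refine ⟨Q, fun k ↦ ?_, Polynomial.ext fun k ↦ ?_⟩
  · rw [hcoeff]
    exact ⟨Submodule.smul_of_tower_mem _ _ (hP k).1, fun hk ↦ by rw [(hP k).2 hk, smul_zero]⟩
  · rw [coeff_eulerDerivation, hcoeff, ← Nat.cast_smul_eq_nsmul ℚ, smul_smul]
    obtain rfl | hk := eq_or_ne k 0
    · simp [(hP 0).2 n.succ_pos]
    · rw [mul_inv_cancel₀ (Nat.cast_ne_zero.2 hk), one_smul]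

lemma isNilpotent_of_coeff_mem {U : Submodule R A} (hU : IsNilpotent U) {P : A[X]}
    (hP : ∀ k, P.coeff k ∈ U) : IsNilpotent P := by
  obtain ⟨n, hn⟩ := hU
  have hpow (m k : ℕ) : (P ^ m).coeff k ∈ U ^ m := by
    induction m generalizing k with
    | zero =>
      rw [pow_zero, pow_zero, coeff_one]
      split_ifs
      exacts [Submodule.one_le.1 le_rfl, zero_mem _]
    | succ m ih =>
      rw [pow_succ, pow_succ, coeff_mul]
      exact sum_mem fun p _ ↦ Submodule.mul_mem_mul (ih p.1) (hP p.2)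
  exact ⟨n, Polynomial.ext fun k ↦ by simpa [hn] using hpow n k⟩

variable (A) in
/-- Evaluation at `1`, multiplicative even though `A` is not assumed commutative, because `1` is
central. -/
def evalOneRingHom : A[X] →+* A :=
  eval₂RingHom' (RingHom.id A) 1 Commute.one_right

lemma evalOneRingHom_apply (P : A[X]) : evalOneRingHom A P = P.eval 1 := rfl

section Exponential

open IsNilpotent (exp)

variable [Algebra ℚ A]

lemma coeff_zero_expSubOneDiv_ad {P : A[X]} (hP : IsNilpotent P) (W : A[X]) :
    (expSubOneDiv (LieAlgebra.ad R A[X] P) W).coeff 0 =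
      expSubOneDiv (LieAlgebra.ad R A (P.coeff 0)) (W.coeff 0) :=
  map_expSubOneDiv_apply (f := (lcoeff A 0).restrictScalars R)
    (LieAlgebra.ad_nilpotent_of_nilpotent hP)
    (LieAlgebra.ad_nilpotent_of_nilpotent (hP.map constantCoeff))
    (LinearMap.ext fun W ↦ by simp [Ring.lie_def, mul_coeff_zero]) W

lemma X_mul_expSubOneDiv_ad {P : A[X]} (hP : IsNilpotent P) (W : A[X]) :
    X * expSubOneDiv (LieAlgebra.ad R A[X] P) W =
      expSubOneDiv (LieAlgebra.ad R A[X] P) (X * W) :=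
  have had := LieAlgebra.ad_nilpotent_of_nilpotent hP
  map_expSubOneDiv_apply (f := LinearMap.mulLeft R X) had had
    (LinearMap.ext fun W ↦ by simp [Ring.lie_def, mul_sub, ← mul_assoc, ← X_mul (p := P)]) W

variable [Algebra ℚ R]

lemma exp_eval_one_mul_exp_neg_coeff_zero {P Q : A[X]} (hP : IsNilpotent P) (hQ : IsNilpotent Q)
    (h : expSubOneDiv (LieAlgebra.ad R A[X] P) (eulerDerivation R A P) =
      expSubOneDiv (LieAlgebra.ad R A[X] Q) (eulerDerivation R A Q)) :
    exp (P.eval 1) * exp (-P.coeff 0) = exp (Q.eval 1) * exp (-Q.coeff 0) := by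
  have hconst := eq_C_of_eulerDerivation_eq_zero
    (derivation_exp_neg_mul_exp_eq_zero eulerDerivation_mul hP hQ h)
  have hzero := congrArg constantCoeff hconst
  have hone := congrArg (evalOneRingHom A) hconst
  simp only [map_mul, IsNilpotent.map_exp hP, IsNilpotent.map_exp hQ.neg, map_neg,
    constantCoeff_apply, evalOneRingHom_apply, eval_C, coeff_C_zero] at hzero hone
  have hP₀ : IsNilpotent (P.coeff 0) := hP.map constantCoeff
  have hQ₁ : IsNilpotent (Q.eval 1) := hQ.map (evalOneRingHom A)
  calc exp (P.eval 1) * exp (-P.coeff 0)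
      = exp (Q.eval 1) * (exp (-Q.eval 1) * exp (P.eval 1)) * exp (-P.coeff 0) := by
        rw [← mul_assoc, IsNilpotent.exp_mul_exp_neg_self hQ₁, one_mul]
    _ = exp (Q.eval 1) * exp (-Q.coeff 0) * (exp (P.coeff 0) * exp (-P.coeff 0)) := by
        rw [hone, ← hzero]; simp only [mul_assoc]
    _ = exp (Q.eval 1) * exp (-Q.coeff 0) := by
        rw [IsNilpotent.exp_mul_exp_neg_self hP₀, mul_one]

end Exponential

end GradedPolynomial

section CampbellBakerHausdorff

open Polynomial
open IsNilpotent (exp)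

variable {R A : Type*} [CommRing R] [Ring A] [Algebra R A] {G : ℕ → Submodule R A}

lemma isNilpotent_of_mem_gradedFiltration (hU : IsNilpotent (⨆ m, G m)) {n : ℕ} {P : A[X]}
    (hP : P ∈ gradedFiltration G n) : IsNilpotent P :=
  isNilpotent_of_coeff_mem hU fun k ↦ le_iSup G k (hP k).1

lemma eval_one_sub_coeff_one_mem {Q : A[X]} (hQ : Q ∈ gradedFiltration G 1) :
    Q.eval 1 - Q.coeff 1 ∈ ⨆ m, G (m + 2) := by
  rw [eval_eq_sum_range' (n := Q.natDegree + 1 + 1) (by omega), Finset.sum_range_succ',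
    Finset.sum_range_succ', (hQ 0).2 one_pos]
  simpa using sum_mem fun i _ ↦ Submodule.mem_iSup_of_mem i (hQ (i + 2)).1

variable [Algebra ℚ R] [Algebra ℚ A] [SetLike.GradedBracket G]

lemma coeff_one_expSubOneDiv_ad_eulerDerivation (hU : IsNilpotent (⨆ m, G m)) {Q : A[X]}
    (hQ : Q ∈ gradedFiltration G 1) :
    (expSubOneDiv (LieAlgebra.ad R A[X] Q) (eulerDerivation R A Q)).coeff 1 = Q.coeff 1 := by
  have hEQ : eulerDerivation R A Q ∈ gradedFiltration G 1 :=
    map_eulerDerivation_gradedFiltration (G := G) 0 ▸ Submodule.mem_map_of_mem hQ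
  have hmem := expSubOneDiv_ad_add_sub_mem gradedFiltration_antitone
    (fun q hq ↦ LieAlgebra.ad_nilpotent_of_nilpotent (isNilpotent_of_mem_gradedFiltration hU hq))
    (zero_mem _) (zero_mem _) hQ hEQ
  have hcoeff := (hmem 1).2 one_lt_two
  simpa [coeff_eulerDerivation, sub_eq_zero] using hcoeff

theorem exists_exp_add_mul_exp_neg_eq {N : ℕ} (hN : ∀ m, N ≤ m → G m = ⊥)
    (hU : IsNilpotent (⨆ m, G m)) {a b : A} (ha : a ∈ G 0) (hb : b ∈ G 1) :
    ∃ r ∈ ⨆ m, G (m + 2),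
      IsNilpotent (expSubOneDiv (LieAlgebra.ad R A a) b + r) ∧
      exp (a + b) * exp (-a) = exp (expSubOneDiv (LieAlgebra.ad R A a) b + r) := by
  let P : A[X] := C a + C b * X
  have hlogP : eulerDerivation R A P = X * C b := by
    simp [P, eulerDerivation_apply]
  have hbX : X * C b ∈ gradedFiltration G 1 := by
    rw [X_mul, C_mul_X_eq_monomial]
    exact monomial_mem_gradedFiltration le_rfl hb
  have hP : P ∈ gradedFiltration G 0 :=
    add_mem (monomial_mem_gradedFiltration le_rfl ha)
      (X_mul (p := C b) ▸ gradedFiltration_antitone zero_le_one hbX)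
  have hPnil := isNilpotent_of_mem_gradedFiltration hU hP
  obtain ⟨Q, hQ, hlog⟩ := exists_expSubOneDiv_ad_apply_eq gradedFiltration_antitone
    (fun q hq ↦ LieAlgebra.ad_nilpotent_of_nilpotent (isNilpotent_of_mem_gradedFiltration hU hq))
    map_eulerDerivation_gradedFiltration (gradedFiltration_eq_bot hN)
    (expSubOneDiv_ad_mem gradedFiltration_antitone hP hbX)
  have hQnil := isNilpotent_of_mem_gradedFiltration hU hQ
  have hcoeff : Q.coeff 1 = expSubOneDiv (LieAlgebra.ad R A a) b := by
    rw [← coeff_one_expSubOneDiv_ad_eulerDerivation hU hQ, hlog, ← X_mul_expSubOneDiv_ad hPnil,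
      coeff_X_mul, coeff_zero_expSubOneDiv_ad hPnil]
    simp [P]
  refine ⟨Q.eval 1 - Q.coeff 1, eval_one_sub_coeff_one_mem hQ, ?_⟩
  rw [← hcoeff, add_sub_cancel]
  refine ⟨hQnil.map (evalOneRingHom A), ?_⟩
  have hexp := exp_eval_one_mul_exp_neg_coeff_zero (R := R) hPnil hQnil (by rw [hlogP, hlog])
  simpa [P, (hQ 0).2 one_pos] using hexp

end CampbellBakerHausdorff

section NilpotentRepresentation

open Module (End)
open LieModule (toEnd lowerCentralSeries genWeightSpace)

lemma isNilpotent_range_toEnd (R L M : Type*) [CommRing R] [LieRing L] [LieAlgebra R L]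
    [AddCommGroup M] [Module R M] [LieRingModule L M] [LieModule R L M]
    [LieModule.IsNilpotent L M] :
    IsNilpotent (LinearMap.range (toEnd R L M : L →ₗ[R] End R M)) := by
  obtain ⟨k, hk⟩ := LieModule.IsNilpotent.nilpotent R L M
  have hpow (n : ℕ) {T : End R M}
      (hT : T ∈ LinearMap.range (toEnd R L M : L →ₗ[R] End R M) ^ n) (v : M) :
      T v ∈ lowerCentralSeries R L M n := by
    induction n generalizing T v with
    | zero => simp
    | succ n ih =>
      rw [pow_succ'] at hT
      induction hT using Submodule.mul_induction_on' with
      | mem_mul_mem x hx T hT =>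
        obtain ⟨x, rfl⟩ := hx
        rw [LieModule.lowerCentralSeries_succ]
        exact LieSubmodule.lie_mem_lie (LieSubmodule.mem_top x) (ih hT v)
      | add T _ T' _ h h' => exact add_mem h h'
  exact ⟨k, (Submodule.eq_bot_iff _).2 fun T hT ↦ LinearMap.ext fun v ↦ by
    simpa [hk] using hpow k hT v⟩

variable {K : Type*} [Field K] [CharZero K]

/-- The weights of a nilpotent Lie algebra are linear and vanish on brackets, so they vanish as soon
as they do on generators. -/
lemma isNilpotent_of_lieSpan_eq_top {L M : Type*} [LieRing L] [LieAlgebra K L]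
    [LieRing.IsNilpotent L] [AddCommGroup M] [Module K M] [FiniteDimensional K M]
    [LieRingModule L M] [LieModule K L M] [LieModule.IsTriangularizable K L M] {S : Set L}
    (hS : LieSubalgebra.lieSpan K L S = ⊤) (hnil : ∀ x ∈ S, IsNilpotent (toEnd K L M x)) :
    LieModule.IsNilpotent L M := by
  have hzero (χ : LieModule.Weight K L M) : (χ : L → K) = 0 := by
    funext x
    have hx : x ∈ LieSubalgebra.lieSpan K L S := hS ▸ LieSubalgebra.mem_top x
    induction hx using LieSubalgebra.lieSpan_induction with
    | mem x hx => exact LieModule.Weight.apply_eq_zero_of_isNilpotent x (hnil x hx) χ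
    | zero => exact map_zero χ.toLinear
    | add x y _ _ hx hy => simp [hx,hy]
    | smul r x _ hx => simp [hx]
    | lie x y _ _ _ _ => exact χ.apply_lie x y
  have htop : genWeightSpace M (0 : L → K) = ⊤ := by
    rw [eq_top_iff, ← LieModule.iSup_genWeightSpace_eq_top' K L M]
    exact iSup_le fun χ ↦ hzero χ ▸ le_rfl
  rw [← LieModule.isNilpotent_of_top_iff' (R := K), ← htop]
  infer_instance

lemma isNilpotent_toSubmodule_lieSpan [IsAlgClosed K] {V : Type*} [AddCommGroup V] [Module K V]
    [FiniteDimensional K V] {S : Set (End K V)}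
    [LieRing.IsNilpotent (LieSubalgebra.lieSpan K (End K V) S)]
    (hS : ∀ x ∈ S, IsNilpotent x) :
    IsNilpotent (LieSubalgebra.lieSpan K (End K V) S).toSubmodule := by
  have : LieModule.IsNilpotent (LieSubalgebra.lieSpan K (End K V) S) V :=
    isNilpotent_of_lieSpan_eq_top LieSubalgebra.lieSpan_lieSpan_coe_preimage
      fun x hx ↦ hS x hx
  convert isNilpotent_range_toEnd K (LieSubalgebra.lieSpan K (End K V) S) V
  ext x
  simp

end NilpotentRepresentation

namespace LieMon

open Module (End)
open Submodule (span span_mono subset_span)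

variable {V : Type*} [AddCommGroup V] [Module ℂ V] {N₀ N' x : End ℂ V} {m l : ℕ}

lemma degree_le_length (h : LieMon N₀ N' x m l) : m ≤ l := by
  induction h with
  | base0 => exact zero_le_one
  | base1 => exact le_rfl
  | bracket _ _ hx hy => exact add_le_add hx hy

lemma mem_lieSpan (h : LieMon N₀ N' x m l) :
    x ∈ LieSubalgebra.lieSpan ℂ (End ℂ V) {N₀, N'} := by
  induction h with
  | base0 | base1 => exact LieSubalgebra.subset_lieSpan (by simp)
  | bracket _ _ hx hy => exact LieSubalgebra.lie_mem _ hx hy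

lemma mem_pow (h : LieMon N₀ N' x m l) {W : Submodule ℂ (End ℂ V)} (h₀ : N₀ ∈ W)
    (h' : N' ∈ W) : x ∈ W ^ l := by
  induction h with
  | base0 => rwa [Submodule.pow_one]
  | base1 => rwa [Submodule.pow_one]
  | bracket _ _ hx hy => exact lie_mem_pow_add hx hy

variable (N₀ N') in
/-- The elements of degree `m` in `N'` of the Lie algebra generated by `N₀` and `N'`. The sum over
`m` need not be direct. -/
def degreePart (m : ℕ) : Submodule ℂ (End ℂ V) := span ℂ {x | ∃ l, LieMon N₀ N' x m l}

lemma mem_degreePart (h : LieMon N₀ N' x m l) : x ∈ degreePart N₀ N' m :=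
  subset_span ⟨l, h⟩

instance : SetLike.GradedBracket (degreePart N₀ N') where
  bracket_mem _ _ _ _ hx hy := by
    refine lie_mem_of_mem_span ?_ hx hy
    rintro x ⟨l, h⟩ y ⟨k, h'⟩
    exact (h.bracket h').mem_degreePart

lemma degreePart_le_lieSpan (m : ℕ) :
    degreePart N₀ N' m ≤ (LieSubalgebra.lieSpan ℂ (End ℂ V) {N₀, N'}).toSubmodule :=
  Submodule.span_le.2 fun _ ⟨_, h⟩ ↦ h.mem_lieSpan

lemma exists_degreePart_eq_bot
    (hW : IsNilpotent (LieSubalgebra.lieSpan ℂ (End ℂ V) {N₀, N'}).toSubmodule) :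
    ∃ k, ∀ m, k ≤ m → degreePart N₀ N' m = ⊥ := by
  obtain ⟨k, hk⟩ := hW
  refine ⟨k, fun m hm ↦ ?_⟩
  rw [degreePart, Submodule.span_eq_bot]
  rintro x ⟨l, h⟩
  have hx := h.mem_pow (W := (LieSubalgebra.lieSpan ℂ (End ℂ V) {N₀, N'}).toSubmodule)
    base0.mem_lieSpan base1.mem_lieSpan
  rwa [pow_eq_zero_of_le (hm.trans h.degree_le_length) hk] at hx

lemma iSup_degreePart_add_le (n : ℕ) :
    ⨆ m, degreePart N₀ N' (m + n) ≤ span ℂ {x | ∃ m l, n ≤ m ∧ LieMon N₀ N' x m l} :=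
  iSup_le fun m ↦ span_mono fun _ ⟨l, h⟩ ↦ ⟨m + n, l, Nat.le_add_left n m, h⟩

variable (N₀ N') in
/-- The span of the Lie monomials of length at least `l`, a filtration witnessing nilpotency of the
Lie algebra generated by `N₀` and `N'` once long monomials vanish. -/
def lengthFiltration (l : ℕ) : Submodule ℂ (End ℂ V) :=
  span ℂ {x | ∃ m k, l ≤ k ∧ LieMon N₀ N' x m k}

lemma mem_lengthFiltration (h : LieMon N₀ N' x m l) : x ∈ lengthFiltration N₀ N' l :=
  subset_span ⟨m, l, le_rfl, h⟩

lemma lengthFiltration_antitone : Antitone (lengthFiltration N₀ N') :=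
  fun _ _ hl ↦ span_mono fun _ ⟨m, k, hk, h⟩ ↦ ⟨m, k, hl.trans hk, h⟩

instance : SetLike.GradedBracket (lengthFiltration N₀ N') where
  bracket_mem _ _ _ _ hx hy := by
    refine lie_mem_of_mem_span ?_ hx hy
    rintro x ⟨i, l, hl, h⟩ y ⟨j, k, hk, h'⟩
    exact lengthFiltration_antitone (add_le_add hl hk) (h.bracket h').mem_lengthFiltration

lemma lengthFiltration_eq_bot (hl : ∀ x m k, LieMon N₀ N' x m k → l ≤ k → x = 0) :
    lengthFiltration N₀ N' l = ⊥ := by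
  rw [lengthFiltration, Submodule.span_eq_bot]
  rintro x ⟨m, k, hk, h⟩
  exact hl x m k h hk

lemma isNilpotent_lieSpan (hl : ∀ x m k, LieMon N₀ N' x m k → l ≤ k → x = 0) :
    LieRing.IsNilpotent (LieSubalgebra.lieSpan ℂ (End ℂ V) {N₀, N'}) :=
  isNilpotent_lieSpan_of_subset lengthFiltration_antitone
    (Set.pair_subset base0.mem_lengthFiltration base1.mem_lengthFiltration)
    (lengthFiltration_eq_bot hl)

end LieMon

section EndomorphismExponential

open Finset
open Module (End finrank)

lemma pow_finrank_eq_zero_of_isNilpotent {K V : Type*} [Field K] [AddCommGroup V] [Module K V]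
    [FiniteDimensional K V] {x : End K V} (hx : IsNilpotent x) : x ^ finrank K V = 0 := by
  have h := LinearMap.aeval_self_charpoly x
  rwa [hx.charpoly_eq_X_pow_finrank, map_pow, Polynomial.aeval_X] at h

variable {V : Type*} [AddCommGroup V] [Module ℂ V]

lemma adE_eq_ad (a : End ℂ V) : adE a = LieAlgebra.ad ℂ (End ℂ V) a :=
  LinearMap.ext fun _ ↦ rfl

variable [FiniteDimensional ℂ V] [Algebra ℚ (End ℂ V)] {a : End ℂ V}

lemma expNil_eq_exp_s15 (ha : IsNilpotent a) : expNil a = IsNilpotent.exp a := by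
  rw [expNil, IsNilpotent.exp_eq_sum
    (pow_eq_zero_of_le (Nat.le_succ _) (pow_finrank_eq_zero_of_isNilpotent ha))]
  refine sum_congr rfl fun i _ ↦ ?_
  simpa using ratCast_smul_eq ℂ ℚ (i.factorial : ℚ)⁻¹ (a ^ i)

lemma sum_adE_pow_eq_expSubOneDiv_ad (ha : IsNilpotent a) (b : End ℂ V) :
    ∑ m ∈ range (2 * finrank ℂ V + 2), ((m + 1).factorial : ℂ)⁻¹ • (adE a ^ m) b =
      expSubOneDiv (LieAlgebra.ad ℂ (End ℂ V) a) b := by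
  have hpow : LieAlgebra.ad ℂ (End ℂ V) a ^ (2 * finrank ℂ V + 2) = 0 :=
    ad_pow_eq_zero (pow_finrank_eq_zero_of_isNilpotent ha) (by omega)
  rw [expSubOneDiv_eq_sum hpow, LinearMap.sum_apply]
  refine sum_congr rfl fun i _ ↦ ?_
  simpa [adE_eq_ad] using
    ratCast_smul_eq ℂ ℚ ((i + 1).factorial : ℚ)⁻¹ ((LieAlgebra.ad ℂ (End ℂ V) a ^ i) b)

end EndomorphismExponential

theorem cbh_linear_in_Nprime_general {V : Type*} [AddCommGroup V] [Module ℂ V]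
    [FiniteDimensional ℂ V] (N₀ N' : Module.End ℂ V) (h₀ : IsNilpotent N₀)
    (h' : IsNilpotent N')
    [LieRing.IsNilpotent (LieSubalgebra.lieSpan ℂ (Module.End ℂ V) {N₀, N'})] (c : ℂ) :
    ∃ R ∈ Submodule.span ℂ {x : Module.End ℂ V | ∃ m l : ℕ, 2 ≤ m ∧ LieMon N₀ N' x m l},
      expNil (c • (N₀ + N')) * expNil (-(c • N₀)) =
        expNil ((∑ m ∈ Finset.range (2 * Module.finrank ℂ V + 2),
          (((m + 1).factorial : ℂ))⁻¹ • ((adE (c • N₀)) ^ m) (c • N')) + R) := by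
  let : Module ℚ V := Module.compHom V (algebraMap ℚ ℂ)
  have hW := isNilpotent_toSubmodule_lieSpan (S := {N₀, N'}) (by simp [h₀, h'])
  obtain ⟨k, hk⟩ := LieMon.exists_degreePart_eq_bot hW
  have hN₀ : c • N₀ ∈ LieMon.degreePart N₀ N' 0 :=
    Submodule.smul_mem _ c LieMon.base0.mem_degreePart
  have hN' : c • N' ∈ LieMon.degreePart N₀ N' 1 :=
    Submodule.smul_mem _ c LieMon.base1.mem_degreePart
  obtain ⟨R, hR, hQ, hexp⟩ := exists_exp_add_mul_exp_neg_eq hk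
    (isNilpotent_of_le hW (iSup_le LieMon.degreePart_le_lieSpan)) hN₀ hN'
  have hc₀ : IsNilpotent (c • N₀) := h₀.smul c
  have hsum : IsNilpotent (c • (N₀ + N')) :=
    isNilpotent_of_mem hW
      (Submodule.smul_mem _ c (add_mem LieMon.base0.mem_lieSpan LieMon.base1.mem_lieSpan))
  refine ⟨R, LieMon.iSup_degreePart_add_le 2 hR, ?_⟩
  rw [sum_adE_pow_eq_expSubOneDiv_ad hc₀, expNil_eq_exp_s15 hsum, expNil_eq_exp_s15 hc₀.neg,
    expNil_eq_exp_s15 hQ, smul_add, hexp]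

/-- Campbell–Baker–Hausdorff:
`exp(iy(N₀ + N')) exp(−iyN₀) = exp(Q)` with
`Q = ((e^{ad(iyN₀)} − 1)/ad(iyN₀))(iyN') + R = Σ_m (ad(iyN₀))^m (iyN')/(m+1)! + R`,
where `R` lies in the (span of the) Lie monomials containing `N'` at least twice. -/
theorem cbh_linear_in_Nprime {V : Type*} [AddCommGroup V] [Module ℂ V]
    [FiniteDimensional ℂ V] (N₀ N' : Module.End ℂ V)
    (hnil : ∀ (x : Module.End ℂ V) (m l : ℕ), LieMon N₀ N' x m l →
      x ^ (Module.finrank ℂ V + 1) = 0)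
    (hlen : ∃ L : ℕ, ∀ (x : Module.End ℂ V) (m l : ℕ), LieMon N₀ N' x m l → L ≤ l → x = 0)
    (y : ℝ) :
    ∃ R ∈ Submodule.span ℂ {x : Module.End ℂ V | ∃ m l : ℕ, 2 ≤ m ∧ LieMon N₀ N' x m l},
      expNil ((Complex.I * (y : ℂ)) • (N₀ + N')) * expNil (-((Complex.I * (y : ℂ)) • N₀)) =
        expNil ((∑ m ∈ Finset.range (2 * Module.finrank ℂ V + 2),
          (((m + 1).factorial : ℂ))⁻¹ •
            ((adE ((Complex.I * (y : ℂ)) • N₀)) ^ m) ((Complex.I * (y : ℂ)) • N')) + R) := by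
  have := LieMon.isNilpotent_lieSpan hlen.choose_spec
  exact cbh_linear_in_Nprime_general N₀ N' ⟨_, hnil _ _ _ .base0⟩ ⟨_, hnil _ _ _ .base1⟩ _
end
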